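/- Let G be a 2-connected subgraph of the n-dimensional grid graph Z^n, and let a, b be distinct vertices of G with every vertex z ∉ {a, b} of degree at least d in G. Then G contains an a–b path of length at least 2^d - 2. -/

import Mathlib

/-- The grid graph on `ℤ^n`: two vertices are adjacent iff they differ by exactly 1
in exactly one coordinate and agree elsewhere. -/
def gridGraph (n : ℕ) : SimpleGraph (Fin n → ℤ) :=
  SimpleGraph.fromRel (fun x y => ∃ i, |x i - y i| = 1 ∧ ∀ j, j ≠ i → x j = y j)

def TwoConnected {V : Type*} (H : SimpleGraph V) : Prop :=
  (∃ x y z : V, x ≠ y ∧ x ≠ z ∧ y ≠ z) ∧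
  ∀ v : V, ((⊤ : H.Subgraph).deleteVerts {v}).coe.Connected


namespace GP
open SimpleGraph

variable {V : Type*} {G : SimpleGraph V}

def R (G : SimpleGraph V) (W : Set V) (x y : V) : Prop :=
  ∃ p : G.Walk x y, ∀ v ∈ p.support, v ∈ W

def PT (G : SimpleGraph V) (W : Set V) (x y : V) (n : ℕ) : Prop :=
  ∃ p : G.Walk x y, p.IsPath ∧ (∀ v ∈ p.support, v ∈ W) ∧ p.length = n

def PL (G : SimpleGraph V) (W : Set V) (x y : V) (n : ℕ) : Prop :=
  ∃ m, n ≤ m ∧ PT G W x y m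

theorem R.refl {W : Set V} {x : V} (h : x ∈ W) : R G W x x := ⟨Walk.nil, by simpa⟩
theorem R.symm {W : Set V} {x y : V} (h : R G W x y) : R G W y x := by
  obtain ⟨p, hp⟩ := h
  exact ⟨p.reverse, by simpa using hp⟩
theorem R.trans {W : Set V} {x y z : V} (h : R G W x y) (h' : R G W y z) : R G W x z := by
  obtain ⟨p, hp⟩ := h
  obtain ⟨q, hq⟩ := h'
  refine ⟨p.append q, fun v hv => ?_⟩
  rw [Walk.mem_support_append_iff] at hv
  exact hv.elim (hp v) (hq v)
theorem R.mono {W W' : Set V} {x y : V} (h : R G W x y) (hs : W ⊆ W') : R G W' x y := by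
  obtain ⟨p, hp⟩ := h
  exact ⟨p, fun v hv => hs (hp v hv)⟩
theorem R.left {W : Set V} {x y : V} (h : R G W x y) : x ∈ W := by
  obtain ⟨p, hp⟩ := h
  exact hp _ p.start_mem_support
theorem R.right {W : Set V} {x y : V} (h : R G W x y) : y ∈ W := h.symm.left
theorem R.adj {W : Set V} {x y : V} (h : G.Adj x y) (hx : x ∈ W) (hy : y ∈ W) : R G W x y :=
  ⟨Walk.cons h Walk.nil, by simp [hx, hy]⟩

theorem R.cons {W : Set V} {x w y : V} (h : G.Adj x w) (hx : x ∈ W) (h' : R G W w y) :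
    R G W x y := (R.adj h hx h'.left).trans h'
theorem R.snoc {W : Set V} {x w y : V} (h' : R G W x w) (h : G.Adj w y) (hy : y ∈ W) :
    R G W x y := h'.trans (R.adj h h'.right hy)

/-- exit lemma -/
theorem R.exit {W : Set V} {x y : V} (h : R G W x y) (X : Set V) (hx : x ∈ X) (hy : y ∉ X) :
    ∃ u v, R G (W ∩ X) x u ∧ u ∈ X ∧ u ∈ W ∧ v ∈ W ∧ v ∉ X ∧ G.Adj u v := by
  obtain ⟨p, hp⟩ := h
  induction p with
  | nil => exact absurd hx hy
  | @cons x' w _ hadj p ih =>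
    simp only [Walk.support_cons, List.mem_cons, forall_eq_or_imp] at hp
    by_cases hw : w ∈ X
    · obtain ⟨u, v, h1, h2⟩ := ih hw hy hp.2
      exact ⟨u, v, R.cons hadj ⟨hp.1, hx⟩ h1, h2⟩
    · exact ⟨x', w, R.refl ⟨hp.1, hx⟩, hx, hp.1, hp.2 _ p.start_mem_support, hw, hadj⟩

/-- closed sets contain reachable sets -/
theorem R.closed {W : Set V} {x y : V} (h : R G W x y) (X : Set V) (hx : x ∈ X)
    (hc : ∀ u ∈ X, u ∈ W → ∀ v ∈ W, G.Adj u v → v ∈ X) : y ∈ X ∧ R G (W ∩ X) x y := by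
  obtain ⟨p, hp⟩ := h
  induction p with
  | @nil x => exact ⟨hx, R.refl ⟨hp x (by simp), hx⟩⟩
  | @cons x' w _ hadj p ih =>
    simp only [Walk.support_cons, List.mem_cons, forall_eq_or_imp] at hp
    have hwW := hp.2 _ p.start_mem_support
    have hw : w ∈ X := hc _ hx hp.1 _ hwW hadj
    obtain ⟨h1, h2⟩ := ih hw hp.2
    exact ⟨h1, R.cons hadj ⟨hp.1, hx⟩ h2⟩

/-- avoid a vertex or hit it -/
theorem R.avoid {W : Set V} {x y : V} (h : R G W x y) (s : V) (hxs : x ≠ s) :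
    R G (W \ {s}) x y ∨ ∃ u, R G (W \ {s}) x u ∧ G.Adj u s ∧ s ∈ W := by
  by_cases h' : R G (W \ {s}) x y
  · exact Or.inl h'
  right
  obtain ⟨u, v, h1, h2, h3, h4, h5, h6⟩ :=
    h.exit {z | R G (W \ {s}) x z} (R.refl ⟨h.left, hxs⟩) h'
  by_cases hv : v = s
  · subst hv; exact ⟨u, h2, h6, h4⟩
  · exact absurd (R.trans h2 (R.adj h6 h2.right ⟨h4, hv⟩)) h5

theorem R.avoid' {W : Set V} {x y : V} (h : R G W x y) (s : V) :
    R G (W \ {s}) x y ∨ (R G W x s ∧ R G W s y) := by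
  classical
  obtain ⟨p, hp⟩ := h
  by_cases hs : s ∈ p.support
  · right
    exact ⟨⟨p.takeUntil s hs, fun v hv => hp v (p.support_takeUntil_subset_support hs hv)⟩,
      ⟨p.dropUntil s hs, fun v hv => hp v (p.support_dropUntil_subset_support hs hv)⟩⟩
  · left
    exact ⟨p, fun v hv => ⟨hp v hv, by rintro rfl; exact hs hv⟩⟩

/-- reach a set for the first time -/
theorem R.hit {W : Set V} {x y : V} (h : R G W x y) (Y : Set V) (hy : y ∈ Y) :
    ∃ y' ∈ Y, R G ((W \ Y) ∪ {y'}) x y' := by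
  by_cases hx : x ∈ Y
  · exact ⟨x, hx, R.refl (by simp)⟩
  obtain ⟨u, v, h1, h2, h3, h4, h5, h6⟩ := h.exit Yᶜ hx (by simpa using hy)
  refine ⟨v, by simpa using h5, (h1.mono ?_).trans (R.adj h6 (Or.inl ⟨h3, h2⟩) (Or.inr rfl))⟩
  intro z hz; exact Or.inl ⟨hz.1, hz.2⟩

theorem PT.R {W : Set V} {x y : V} {n : ℕ} (h : PT G W x y n) : R G W x y := by
  obtain ⟨p, h1, h2, h3⟩ := h; exact ⟨p, h2⟩
theorem PL.R {W : Set V} {x y : V} {n : ℕ} (h : PL G W x y n) : R G W x y := by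
  obtain ⟨m, h1, h2⟩ := h; exact h2.R
theorem R.PT {W : Set V} {x y : V} (h : R G W x y) : ∃ n, PT G W x y n := by
  classical
  obtain ⟨p, hp⟩ := h
  exact ⟨_, p.bypass, p.bypass_isPath, fun v hv => hp v (p.support_bypass_subset_support hv), rfl⟩
theorem PT.mono {W W' : Set V} {x y : V} {n : ℕ} (h : PT G W x y n) (hs : W ⊆ W') :
    PT G W' x y n := by
  obtain ⟨p, h1, h2, h3⟩ := h; exact ⟨p, h1, fun v hv => hs (h2 v hv), h3⟩
theorem PL.mono {W W' : Set V} {x y : V} {n : ℕ} (h : PL G W x y n) (hs : W ⊆ W') :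
    PL G W' x y n := by
  obtain ⟨m, h1, h2⟩ := h; exact ⟨m, h1, h2.mono hs⟩
theorem PT.symm {W : Set V} {x y : V} {n : ℕ} (h : PT G W x y n) : PT G W y x n := by
  obtain ⟨p, h1, h2, h3⟩ := h
  exact ⟨p.reverse, h1.reverse, by simpa using h2, by simpa using h3⟩
theorem PL.symm {W : Set V} {x y : V} {n : ℕ} (h : PL G W x y n) : PL G W y x n := by
  obtain ⟨m, h1, h2⟩ := h; exact ⟨m, h1, h2.symm⟩
theorem PL.le {W : Set V} {x y : V} {n m : ℕ} (h : PL G W x y n) (hm : m ≤ n) :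
    PL G W x y m := by
  obtain ⟨k, h1, h2⟩ := h; exact ⟨k, hm.trans h1, h2⟩
theorem PT.pos {W : Set V} {x y : V} {n : ℕ} (h : PT G W x y n) (hxy : x ≠ y) : 1 ≤ n := by
  obtain ⟨p, h1, h2, h3⟩ := h
  by_contra hn
  have : p.length = 0 := by omega
  exact hxy (Walk.eq_of_length_eq_zero this)
theorem PT.left {W : Set V} {x y : V} {n : ℕ} (h : PT G W x y n) : x ∈ W := h.R.left
theorem PT.right {W : Set V} {x y : V} {n : ℕ} (h : PT G W x y n) : y ∈ W := h.R.right
theorem PT.adj {W : Set V} {x y : V} (h : G.Adj x y) (hx : x ∈ W) (hy : y ∈ W) :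
    PT G W x y 1 :=
  ⟨Walk.cons h Walk.nil, by simp [h.ne], by simp [hx, hy], by simp⟩
theorem PT.refl {W : Set V} {x : V} (h : x ∈ W) : PT G W x x 0 := ⟨Walk.nil, by simp, by simpa, rfl⟩

theorem PT.join {W1 W2 : Set V} {x y z : V} {m n : ℕ} (h1 : PT G W1 x y m) (h2 : PT G W2 y z n)
    (hd : ∀ v ∈ W1, v ∈ W2 → v = y) : PT G (W1 ∪ W2) x z (m + n) := by
  obtain ⟨p, p1, p2, p3⟩ := h1
  obtain ⟨q, q1, q2, q3⟩ := h2
  refine ⟨p.append q, ?_, ?_, ?_⟩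
  · rw [Walk.isPath_def, Walk.support_append]
    rw [Walk.isPath_def] at p1 q1
    refine List.nodup_append.2 ⟨p1, q1.tail, ?_⟩
    rintro u hu v hv rfl
    have h := hd u (p2 u hu) (q2 u (List.mem_of_mem_tail hv))
    subst h
    rw [← Walk.cons_tail_support] at q1
    exact (List.nodup_cons.1 q1).1 hv
  · intro v hv
    rw [Walk.mem_support_append_iff] at hv
    exact hv.imp (p2 v) (q2 v)
  · simp [p3, q3]

theorem PT.parity {W : Set V} {x y : V} {n : ℕ} (h : PT G W x y n) (par : V → ℕ)
    (hpar : ∀ u v, G.Adj u v → par u + par v = 1) : (n + par x + par y) % 2 = 0 := by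
  obtain ⟨p, -, -, rfl⟩ := h
  induction p with
  | nil => simp; omega
  | cons hadj p ih => have := hpar _ _ hadj; simp; omega

/-- two-connection Menger -/
theorem M2 {W : Set V} (hW : W.Finite) {x1 x2 : V} (hx1 : x1 ∈ W) (hx2 : x2 ∈ W) (hne : x1 ≠ x2)
    {Y : Set V} (hY : Y ⊆ W)
    (h : ∀ s, ∃ x, (x = x1 ∨ x = x2) ∧ ∃ y ∈ Y, R G (W \ {s}) x y) :
    ∃ (M1 M2 : Set V) (y1 y2 : V), M1 ⊆ W ∧ M2 ⊆ W ∧ (∀ v ∈ M1, v ∉ M2) ∧ y1 ∈ Y ∧ y2 ∈ Y ∧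
      R G M1 x1 y1 ∧ R G M2 x2 y2 := by
  induction hn : W.ncard generalizing W x1 with
  | zero =>
    rw [Set.ncard_eq_zero hW] at hn
    simp [hn] at hx1
  | succ n ih =>
  by_cases h1 : x1 ∈ Y
  · obtain ⟨x, hx, y, hy, hr⟩ := h x1
    have hxx : x = x2 := hx.resolve_left (by rintro rfl; exact hr.left.2 rfl)
    subst hxx
    exact ⟨{x1}, W \ {x1}, x1, y, by simpa, Set.sdiff_subset, by simp, h1, hy, R.refl rfl, hr⟩
  by_cases h2 : x2 ∈ Y
  · obtain ⟨x, hx, y, hy, hr⟩ := h x2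
    have hxx : x = x1 := hx.resolve_right (by rintro rfl; exact hr.left.2 rfl)
    subst hxx
    exact ⟨W \ {x2}, {x2}, y, x2, Set.sdiff_subset, by simpa, by simp, hy, h2, hr, R.refl rfl⟩
  set W' := W \ {x1} with hW'
  have hW'f : W'.Finite := hW.subset Set.sdiff_subset
  let C : V → Set V := fun s => {v | ∃ y ∈ Y, R G (W' \ {s}) v y}
  have hCf : ∀ s, (C s).Finite := fun s => hW'f.subset (by
    rintro v ⟨y, -, hr⟩; exact hr.left.1)
  have hex : ∃ k, ∃ s, x2 ∉ C s ∧ (C s).ncard = k :=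
    ⟨_, x2, by rintro ⟨y, -, hr⟩; exact hr.left.2 rfl, rfl⟩
  classical
  obtain ⟨s, hs, hsk⟩ := Nat.find_spec hex
  have hmin : ∀ s', x2 ∉ C s' → (C s).ncard ≤ (C s').ncard := fun s' hs' => by
    rw [hsk]; exact Nat.find_min' hex ⟨s', hs', rfl⟩
  have hx2Y : ∃ y ∈ Y, R G W' x2 y := by
    obtain ⟨x, hx, y, hy, hr⟩ := h x1
    have hxx : x = x2 := hx.resolve_left (by rintro rfl; exact hr.left.2 rfl)
    subst hxx
    exact ⟨y, hy, hr⟩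
  have key : ∀ s', x2 ∉ C s' → C s ⊆ C s' := by
    intro s' hs'
    by_cases hss : s = s'
    · subst hss; exact subset_rfl
    by_cases hr : R G (W' \ {s'}) x2 s
    · have hsub : C s' ⊆ C s := by
        rintro v ⟨y, hy, hvy⟩
        rcases hvy.avoid' s with h | h
        · exact ⟨y, hy, h.mono (by intro z hz; exact ⟨hz.1.1, hz.2⟩)⟩
        · exact absurd ⟨y, hy, hr.trans h.2⟩ hs'
      exact (Set.eq_of_subset_of_ncard_le hsub (hmin s' hs') (hCf s)).ge
    · rintro v ⟨y, hy, hvy⟩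
      rcases hvy.avoid' s' with h | h
      · exact ⟨y, hy, h.mono (by intro z hz; exact ⟨hz.1.1, hz.2⟩)⟩
      · exfalso
        refine hs ⟨y, hy, R.trans ?_ h.2⟩
        by_cases hx2s : x2 = s'
        · subst hx2s; exact R.refl h.1.right
        obtain ⟨y0, hy0, hr0⟩ := hx2Y
        rcases hr0.avoid s' hx2s with h' | ⟨u, hu, hadj, hs'W⟩
        · exact absurd ⟨y0, hy0, h'⟩ hs'
        rcases hu.avoid' s with h'' | h''
        · exact (h''.mono (by intro z hz; exact ⟨hz.1.1, hz.2⟩)).trans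
            (R.adj hadj ⟨h''.right.1.1, h''.right.2⟩ h.2.left)
        · exact absurd h''.1 hr
  obtain ⟨x, hx, y, hy, hr⟩ := h s
  have hyC : y ∈ C s := ⟨y, hy, R.refl ⟨⟨hr.right.1, by rintro rfl; exact h1 hy⟩, hr.right.2⟩⟩
  have hxC : x ∉ C s := by
    rcases hx with rfl | rfl
    · rintro ⟨y, -, hr⟩; exact hr.left.1.2 rfl
    · exact hs
  obtain ⟨u, v, -, e2, e3, e4, e5, e6⟩ := hr.exit (C s)ᶜ hxC (by simpa using hyC)
  have e5' : v ∈ C s := by simpa using e5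
  have hu : u = x1 := by
    by_contra hu
    obtain ⟨y', hy', hr'⟩ := e5'
    exact e2 ⟨y', hy', R.cons e6 ⟨⟨e3.1, hu⟩, e3.2⟩ hr'⟩
  subst hu
  have hvW : v ∈ W' := by obtain ⟨y', hy', hr'⟩ := e5'; exact hr'.left.1
  have hv2 : v ≠ x2 := by rintro rfl; exact hs e5'
  obtain ⟨M1, M2, y1, y2, a1, a2, a3, a4, a5, a6, a7⟩ :=
    ih hW'f hvW ⟨hx2, hne.symm⟩ hv2
      (fun z hz => ⟨hY hz, by rintro rfl; exact h1 hz⟩) (by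
      intro s'
      by_cases hs' : x2 ∈ C s'
      · obtain ⟨y, hy, hr⟩ := hs'
        exact ⟨x2, Or.inr rfl, y, hy, hr⟩
      · obtain ⟨y, hy, hr⟩ := key s' hs' e5'
        exact ⟨v, Or.inl rfl, y, hy, hr⟩) (by
      rw [Set.ncard_sdiff_singleton_of_mem hx1, hn]; rfl)
  refine ⟨M1 ∪ {u}, M2, y1, y2, ?_, a2.trans Set.sdiff_subset, ?_, a4, a5,
    (R.adj e6 (Or.inr rfl) (Or.inl a6.left)).trans (a6.mono Set.subset_union_left), a7⟩
  · rintro z (hz | rfl)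
    · exact (a1 hz).1
    · exact hx1
  · rintro z (hz | rfl)
    · exact a3 z hz
    · intro hz; exact (a2 hz).2 rfl

end GP

namespace GP
open SimpleGraph
variable {V : Type*} {G : SimpleGraph V}

def Cn (G : SimpleGraph V) (W : Set V) : Prop := ∀ x ∈ W, ∀ y ∈ W, R G W x y

structure Linked (G : SimpleGraph V) (W : Set V) (x y : V) : Prop where
  hx : x ∈ W
  hy : y ∈ W
  ne : x ≠ y
  reach : ∀ v, ∀ z ∈ W, z ≠ v → ∃ w, (w = x ∨ w = y) ∧ R G (W \ {v}) z w

theorem Linked.symm {W : Set V} {x y : V} (h : Linked G W x y) : Linked G W y x :=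
  ⟨h.hy, h.hx, h.ne.symm, fun v z hz hzv => by
    obtain ⟨w, h1, h2⟩ := h.reach v z hz hzv
    exact ⟨w, h1.symm, h2⟩⟩

structure Frag (G : SimpleGraph V) (H : Set V) (b : V) (Y : Set V) (c : V) : Prop where
  ne : Y.Nonempty
  sub : Y ⊆ H
  hb : b ∉ Y
  hc : c ∈ H
  hcY : c ∉ Y
  cl : ∀ u ∈ Y, ∀ v ∈ H, G.Adj u v → v ∈ Y ∨ v = c

def MinF (G : SimpleGraph V) (H : Set V) (b : V) (Y : Set V) (c : V) : Prop :=
  Frag G H b Y c ∧ ∀ Y' c', Frag G H b Y' c' → Y' ⊆ Y → Y' = Y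

def FullF (G : SimpleGraph V) (H : Set V) (b : V) (Y : Set V) (c : V) : Prop :=
  Frag G H b Y c ∧ ∀ Y' c', MinF G H b Y' c' → Y' ⊆ Y

def MinFull (G : SimpleGraph V) (H : Set V) (b : V) (Y : Set V) (c : V) : Prop :=
  FullF G H b Y c ∧ ∀ Y' c', FullF G H b Y' c' → Y' ⊆ Y → Y' = Y

section frag
variable {H : Set V} {b c c1 c2 : V} {Y Y1 Y2 W : Set V}

theorem Frag.comp {s x : V} (hs : s ∈ H) (hx : x ∈ H) (hxs : x ≠ s)
    (hb : ¬ R G (H \ {s}) x b) : Frag G H b {y | R G (H \ {s}) x y} s := by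
  refine ⟨⟨x, R.refl ⟨hx, hxs⟩⟩, fun y hy => hy.right.1, hb, hs, fun h => h.right.2 rfl, ?_⟩
  intro u hu v hv hadj
  by_cases h : v = s
  · exact Or.inr h
  · exact Or.inl (R.snoc hu hadj ⟨hv, h⟩)

theorem Frag.reach (h : Frag G H b Y c) {u v : V} (hu : u ∈ Y) (hr : R G (H \ {c}) u v) :
    v ∈ Y ∧ R G Y u v := by
  obtain ⟨h1, h2⟩ := hr.closed Y hu (fun p hp _ q hq hadj => (h.cl p hp q hq.1 hadj).resolve_right hq.2)
  exact ⟨h1, h2.mono Set.inter_subset_right⟩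

theorem Frag.exit (h : Frag G H b Y c) (hb : b ∈ H) (hH : Cn G H) :
    ∃ u ∈ Y, G.Adj u c := by
  obtain ⟨y, hy⟩ := h.ne
  obtain ⟨u, v, -, h1, -, h2, h3, h4⟩ := (hH y (h.sub hy) b hb).exit Y hy h.hb
  have := (h.cl u h1 v h2 h4).resolve_left h3
  subst this
  exact ⟨u, h1, h4⟩

theorem Frag.attach_unique (h : Frag G H b Y c) (h' : Frag G H b Y c1) (hb : b ∈ H) (hH : Cn G H) :
    c = c1 := by
  obtain ⟨u, h1, h2⟩ := h.exit hb hH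
  exact (h'.cl u h1 c h.hc h2).resolve_left h.hcY

theorem Frag.compl_reach (h : Frag G H b Y c) (hb : b ∈ H) (hH : Cn G H) {x : V} (hx : x ∈ H)
    (hxY : x ∉ Y) : R G (H \ Y) x b := by
  have hcb : R G (H \ Y) c b := by
    obtain ⟨y, hy⟩ := h.ne
    obtain ⟨u, v, -, h1, h1', h2, h3, h4⟩ :=
      (hH y (h.sub hy) b hb).exit {v | R G (H \ Y) v b}ᶜ (fun h' => h'.left.2 hy)
        (fun h' => h' (R.refl ⟨hb, h.hb⟩))
    have h3 : R G (H \ Y) v b := by simpa using h3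
    by_cases hu : u ∈ Y
    · have := (h.cl u hu v h2 h4).resolve_left h3.left.2
      subst this; exact h3
    · exact absurd (show R G (H \ Y) u b from R.cons h4 ⟨h1', hu⟩ h3) h1
  by_contra hcon
  obtain ⟨u, v, -, h1, h1', h2, h3, h4⟩ :=
      (hH x hx b hb).exit {v | R G (H \ Y) x v} (R.refl ⟨hx, hxY⟩) hcon
  have hv : v ∈ Y := by
    by_contra hv
    exact h3 (R.snoc h1 h4 ⟨h2, hv⟩)
  have := (h.cl v hv u h1' h4.symm).resolve_left (R.right h1).2
  subst this
  exact hcon (R.trans h1 hcb)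

theorem Frag.compl_Cn (h : Frag G H b Y c) (hb : b ∈ H) (hH : Cn G H) : Cn G (H \ Y) :=
  fun _ hx _ hy => (h.compl_reach hb hH hx.1 hx.2).trans (h.compl_reach hb hH hy.1 hy.2).symm

/-- closed subsets containing something contain b -/
theorem Cn.all (hH : Cn G H) {X : Set V} {x y : V} (hx : x ∈ H) (hxX : x ∈ X) (hy : y ∈ H)
    (hcl : ∀ u ∈ X, u ∈ H → ∀ v ∈ H, G.Adj u v → v ∈ X) : y ∈ X :=
  ((hH x hx y hy).closed X hxX hcl).1

theorem Frag.union_ne (h1 : Frag G H b Y1 c1) (h2 : Frag G H b Y2 c2) (hb : b ∈ H) (hH : Cn G H)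
    (e1 : c1 ∈ Y2) (e2 : c2 ∈ Y1) : False := by
  obtain ⟨y, hy⟩ := h1.ne
  have : b ∈ Y1 ∪ Y2 := by
    refine Cn.all hH (h1.sub hy) (Or.inl hy) hb ?_
    rintro u (hu | hu) - v hv hadj
    · rcases h1.cl u hu v hv hadj with h | rfl
      · exact Or.inl h
      · exact Or.inr e1
    · rcases h2.cl u hu v hv hadj with h | rfl
      · exact Or.inr h
      · exact Or.inl e2
  exact this.elim h1.hb h2.hb

theorem Frag.inter (h1 : Frag G H b Y1 c1) (h2 : Frag G H b Y2 c2) (hb : b ∈ H) (hH : Cn G H)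
    (hne : (Y1 ∩ Y2).Nonempty) : ∃ c, (c = c1 ∨ c = c2) ∧ Frag G H b (Y1 ∩ Y2) c := by
  by_cases e1 : c1 ∈ Y2
  · have e2 : c2 ∉ Y1 := fun e2 => h1.union_ne h2 hb hH e1 e2
    refine ⟨c1, Or.inl rfl, hne, fun y hy => h1.sub hy.1, fun h => h1.hb h.1, h1.hc, fun h => h1.hcY h.1, ?_⟩
    intro u hu v hv hadj
    rcases h1.cl u hu.1 v hv hadj with h | h
    · rcases h2.cl u hu.2 v hv hadj with h' | rfl
      · exact Or.inl ⟨h, h'⟩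
      · exact absurd h e2
    · exact Or.inr h
  · refine ⟨c2, Or.inr rfl, hne, fun y hy => h1.sub hy.1, fun h => h1.hb h.1, h2.hc, fun h => h2.hcY h.2, ?_⟩
    intro u hu v hv hadj
    rcases h2.cl u hu.2 v hv hadj with h | h
    · rcases h1.cl u hu.1 v hv hadj with h' | rfl
      · exact Or.inl ⟨h', h⟩
      · exact absurd h e1
    · exact Or.inr h

theorem MinF.subset (h1 : MinF G H b Y1 c1) (h2 : Frag G H b Y2 c2) (hb : b ∈ H) (hH : Cn G H)
    {x : V} (x1 : x ∈ Y1) (x2 : x ∈ Y2) : Y1 ⊆ Y2 := by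
  obtain ⟨c, -, hc⟩ := h1.1.inter h2 hb hH ⟨x, x1, x2⟩
  have := h1.2 _ _ hc Set.inter_subset_left
  exact Set.inter_eq_left.1 this

theorem MinF.eq (h1 : MinF G H b Y1 c1) (h2 : MinF G H b Y2 c2) (hb : b ∈ H) (hH : Cn G H)
    {x : V} (x1 : x ∈ Y1) (x2 : x ∈ Y2) : Y1 = Y2 :=
  h2.2 _ _ h1.1 (h1.subset h2.1 hb hH x1 x2)

theorem MinF.subset' (h1 : MinF G H b Y1 c1) (h2 : Frag G H b Y2 c2) (hs : Y2 ⊆ Y1) : Y2 = Y1 :=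
  h1.2 _ _ h2 hs

theorem Frag.exists_MinF (hf : H.Finite) (h : Frag G H b Y c) :
    ∃ Y' c', Y' ⊆ Y ∧ MinF G H b Y' c' := by
  induction hn : Y.ncard using Nat.strong_induction_on generalizing Y c with
  | _ n ih =>
  by_cases hm : MinF G H b Y c
  · exact ⟨Y, c, subset_rfl, hm⟩
  have : ∃ Y' c', Frag G H b Y' c' ∧ Y' ⊆ Y ∧ Y' ≠ Y := by
    by_contra hcon
    push Not at hcon
    exact hm ⟨h, fun Y' c' => hcon Y' c'⟩
  obtain ⟨Y', c', h1, h2, h3⟩ := this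
  have hlt : Y'.ncard < n := by
    rw [← hn]; exact Set.ncard_lt_ncard (h2.ssubset_of_ne h3) (hf.subset h.sub)
  obtain ⟨Y'', c'', h4, h5⟩ := ih _ hlt h1 rfl
  exact ⟨Y'', c'', h4.trans h2, h5⟩

theorem FullF.exists_Min (hf : H.Finite) (h : FullF G H b Y c) :
    ∃ Y' c', MinFull G H b Y' c' := by
  induction hn : Y.ncard using Nat.strong_induction_on generalizing Y c with
  | _ n ih =>
  by_cases hm : MinFull G H b Y c
  · exact ⟨Y, c, hm⟩
  have : ∃ Y' c', FullF G H b Y' c' ∧ Y' ⊆ Y ∧ Y' ≠ Y := by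
    by_contra hcon
    push Not at hcon
    exact hm ⟨h, fun Y' c' => hcon Y' c'⟩
  obtain ⟨Y', c', h1, h2, h3⟩ := this
  have hlt : Y'.ncard < n := by
    rw [← hn]; exact Set.ncard_lt_ncard (h2.ssubset_of_ne h3) (hf.subset h.1.sub)
  exact ih _ hlt h1 rfl

theorem MinF.Cn (h : MinF G H b Y c) : Cn G Y := by
  intro x hx y hy
  have h1 : Frag G H b {y | R G (H \ {c}) x y} c :=
    Frag.comp h.1.hc (h.1.sub hx) (fun e => h.1.hcY (e ▸ hx)) (fun hr => h.1.hb (h.1.reach hx hr).1)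
  have h2 := h.2 _ _ h1 (fun z hz => (h.1.reach hx hz).1)
  have : y ∈ {y | R G (H \ {c}) x y} := by rw [h2]; exact hy
  exact (h.1.reach hx this).2

/-- deleting a vertex from a minimal fragment: everything still reaches the attachment -/
theorem MinF.toC (h : MinF G H b Y c) {v z : V} (hv : v ∈ Y) (hz : z ∈ Y) (hzv : z ≠ v) :
    R G ((Y ∪ {c}) \ {v}) z c := by
  by_contra hcon
  have hF : Frag G H b {y | R G ((Y ∪ {c}) \ {v}) z y} v := by
    refine ⟨⟨z, R.refl ⟨Or.inl hz, hzv⟩⟩, ?_, ?_, h.1.sub hv, fun h => h.right.2 rfl, ?_⟩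
    · intro y hy
      rcases hy.right.1 with h' | rfl
      · exact h.1.sub h'
      · exact h.1.hc
    · intro hb
      rcases hb.right.1 with h' | h'
      · exact h.1.hb h'
      · have hb' : R G ((Y ∪ {c}) \ {v}) z b := hb
        rw [(h' : b = c)] at hb'; exact hcon hb'
    · intro u hu w hw hadj
      rcases hu.right.1 with h' | h'
      · by_cases hwv : w = v
        · exact Or.inr hwv
        · exact Or.inl (R.snoc hu hadj ⟨h.1.cl u h' w hw hadj, hwv⟩)
      · rw [(h' : u = c)] at hu; exact absurd hu hcon
  have hs : {y | R G ((Y ∪ {c}) \ {v}) z y} ⊆ Y := by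
    intro y hy
    rcases hy.right.1 with h' | h'
    · exact h'
    · rw [(h' : y = c)] at hy; exact absurd hy hcon
  have := h.2 _ _ hF hs
  rw [← this] at hv
  exact hv.right.2 rfl

theorem MinF.linked (h : MinF G H b Y c) {u : V} (hu : u ∈ Y) : Linked G (Y ∪ {c}) c u := by
  refine ⟨Or.inr rfl, Or.inl hu, fun e => h.1.hcY (e ▸ hu), ?_⟩
  intro v z hz hzv
  rcases hz with hz | rfl
  · by_cases hv : v ∈ Y
    · exact ⟨c, Or.inl rfl, h.toC hv hz hzv⟩
    · exact ⟨u, Or.inr rfl, (h.Cn z hz u hu).mono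
        (fun w hw => ⟨Or.inl hw, fun e => hv ((e : w = v) ▸ hw)⟩)⟩
  · exact ⟨_, Or.inl rfl, R.refl ⟨Or.inr rfl, hzv⟩⟩

/-- attachments of disjoint fragments avoid each other -/
theorem Frag.attach_notin (h1 : Frag G H b Y1 c1) (h2 : Frag G H b Y2 c2) (hb : b ∈ H) (hH : Cn G H)
    (hd : ∀ x ∈ Y1, x ∉ Y2) : c1 ∉ Y2 := by
  intro e1
  obtain ⟨u, hu, hadj⟩ := h1.exit hb hH
  have := (h2.cl c1 e1 u (h1.sub hu) hadj.symm).resolve_left (hd u hu)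
  subst this
  exact h1.union_ne h2 hb hH e1 hu

theorem Frag.restrict (h1 : Frag G H b Y c) (hd : ∀ x ∈ Y, x ∉ W) (hc : c ∉ W) :
    Frag G (H \ W) b Y c :=
  ⟨h1.ne, fun y hy => ⟨h1.sub hy, hd y hy⟩, h1.hb, ⟨h1.hc, hc⟩, h1.hcY,
    fun u hu v hv hadj => h1.cl u hu v hv.1 hadj⟩

/-- from the attachment of Y2 to b avoiding both -/
theorem Frag.two_reach (h1 : Frag G H b Y1 c1) (h2 : Frag G H b Y2 c2) (hb : b ∈ H) (hH : Cn G H)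
    (hd : ∀ x ∈ Y1, x ∉ Y2) {x : V} (hx : x ∈ H) (hx1 : x ∉ Y1) (hx2 : x ∉ Y2) :
    R G ((H \ Y1) \ Y2) x b :=
  (h2.restrict (W := Y1) (fun x hx hx' => hd x hx' hx)
    (h2.attach_notin h1 hb hH (fun x hx hx' => hd x hx' hx))).compl_reach ⟨hb, h1.hb⟩
    (h1.compl_Cn hb hH) ⟨hx, hx1⟩ hx2

end frag

end GP

set_option linter.unusedVariables false
set_option linter.unusedSimpArgs false
namespace GP
open SimpleGraph
variable {V : Type*} {G : SimpleGraph V}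

structure Ctx (G : SimpleGraph V) (S : Set V) (a b : V) (β : V → V → ℕ) : Prop where
  fin : S.Finite
  ha : a ∈ S
  hb : b ∈ S
  hab : a ≠ b
  L3 : ∀ X, X ⊆ S → X.Nonempty → a ∉ X → b ∉ X → ∀ e ∈ S, e ∉ X → e ≠ a → e ≠ b →
    ∀ p q, ∃ u ∈ X, ∃ v ∈ S, v ∉ X ∧ G.Adj u v ∧ v ≠ p ∧ v ≠ q
  seg : ∀ W, W ⊆ S → ∀ x y, Linked G W x y → (∃ w ∈ W, w ≠ x ∧ w ≠ y) →
    (∀ w ∈ W, w ≠ x → w ≠ y → w ≠ a ∧ w ≠ b ∧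
      ∀ v ∈ S, ∀ v' ∈ S, v ∉ W → v' ∉ W → G.Adj w v → G.Adj w v' → v = v') →
    PL G W x y (β x y)
  one : ∀ u ∈ S, u ≠ a → u ≠ b → ∀ c p, G.Adj u c → (∀ v ∈ S, G.Adj u v → v = c ∨ v = p) → β c u ≤ 1
  bsymm : ∀ x y, β x y = β y x
  K : ∀ x1 y1 x2 y2 l0 k1 l1 k2 l2, PT G S a x1 l0 → PT G S x1 y1 k1 → PT G S y1 x2 l1 →
    PT G S x2 y2 k2 → PT G S y2 b l2 → β x1 y1 ≤ k1 → β x2 y2 ≤ k2 →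
    ((1 ≤ l1 ∧ 2 ≤ l0 + l1 + l2) ∨ 2 ≤ l0 ∨ 2 ≤ l2) → ¬ PT G S a b (l0 + k1 + l1 + k2 + l2)

variable {S : Set V} {a b : V} {β : V → V → ℕ}

theorem Ctx.symm (C : Ctx G S a b β) : Ctx G S b a β where
  fin := C.fin
  ha := C.hb
  hb := C.ha
  hab := C.hab.symm
  L3 X h1 h2 h3 h4 e h5 h6 h7 h8 := C.L3 X h1 h2 h4 h3 e h5 h6 h8 h7
  seg W h1 x y h2 h3 h4 := C.seg W h1 x y h2 h3 (fun w hw h5 h6 =>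
    ⟨(h4 w hw h5 h6).2.1, (h4 w hw h5 h6).1, (h4 w hw h5 h6).2.2⟩)
  one u h1 h2 h3 := C.one u h1 h3 h2
  bsymm := C.bsymm
  K x1 y1 x2 y2 l0 k1 l1 k2 l2 h1 h2 h3 h4 h5 h6 h7 h8 h9 := by
    refine C.K y2 x2 y1 x1 l2 k2 l1 k1 l0 h5.symm h4.symm h3.symm h2.symm h1.symm
      (by rwa [C.bsymm]) (by rwa [C.bsymm]) (by omega) ?_
    have := h9.symm
    rwa [show l2 + k2 + l1 + k1 + l0 = l0 + k1 + l1 + k2 + l2 by ring]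

theorem Ctx.comb (C : Ctx G S a b β) {W0 W1 W2 W3 W4 : Set V} {x1 y1 x2 y2 : V} {l0 l1 l2 : ℕ}
    (p0 : PT G W0 a x1 l0) (p1 : PL G W1 x1 y1 (β x1 y1)) (p2 : PT G W2 y1 x2 l1)
    (p3 : PL G W3 x2 y2 (β x2 y2)) (p4 : PT G W4 y2 b l2)
    (s0 : W0 ⊆ S) (s1 : W1 ⊆ S) (s2 : W2 ⊆ S) (s3 : W3 ⊆ S) (s4 : W4 ⊆ S)
    (d1 : ∀ v ∈ W1, v ∈ W0 → v = x1) (d2 : ∀ v ∈ W2, v ∈ W0 ∨ v ∈ W1 → v = y1)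
    (d3 : ∀ v ∈ W3, v ∈ W0 ∨ v ∈ W1 ∨ v ∈ W2 → v = x2)
    (d4 : ∀ v ∈ W4, v ∈ W0 ∨ v ∈ W1 ∨ v ∈ W2 ∨ v ∈ W3 → v = y2)
    (hc : (1 ≤ l1 ∧ 2 ≤ l0 + l1 + l2) ∨ 2 ≤ l0 ∨ 2 ≤ l2) : False := by
  obtain ⟨k1, hk1, q1⟩ := p1
  obtain ⟨k2, hk2, q3⟩ := p3
  refine C.K x1 y1 x2 y2 l0 k1 l1 k2 l2 (p0.mono s0) (q1.mono s1) (p2.mono s2) (q3.mono s3)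
    (p4.mono s4) hk1 hk2 hc ?_
  have j1 := p0.join q1 (fun v h h' => d1 v h' h)
  have j2 := j1.join p2 (fun v h h' => d2 v h' h)
  have j3 := j2.join q3 (fun v h h' => d3 v h' (by rcases h with (h | h) | h <;> simp [h]))
  have j4 := j3.join p4 (fun v h h' => d4 v h' (by rcases h with ((h | h) | h) | h <;> simp [h]))
  exact j4.mono (by simp [s0, s1, s2, s3, s4])

structure Half (G : SimpleGraph V) (S : Set V) (a b : V) (D H : Set V) : Prop where
  aD : a ∈ D
  bH : b ∈ H
  dj : ∀ v ∈ D, v ∉ H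
  un : ∀ v, v ∈ S ↔ v ∈ D ∨ v ∈ H
  cD : Cn G D
  cH : Cn G H
  cDa : Cn G (D \ {a})
  cHb : Cn G (H \ {b})
  neD : ∃ d ∈ D, d ≠ a
  neH : ∃ d ∈ H, d ≠ b
  m : ∀ v ∈ H, v ≠ b → ∀ u ∈ D, ∀ u' ∈ D, G.Adj v u → G.Adj v u' → u = u'

structure Un (G : SimpleGraph V) (β : V → V → ℕ) (D : Set V) (a : V) (X : Set V) (c : V) : Prop where
  fr : Frag G D a X c
  pl : ∀ u ∈ X, PL G (X ∪ {c}) c u (β c u)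

variable {D H X Y : Set V} {c c' : V}

theorem Half.subD (h : Half G S a b D H) : D ⊆ S := fun v hv => (h.un v).2 (Or.inl hv)
theorem Half.subH (h : Half G S a b D H) : H ⊆ S := fun v hv => (h.un v).2 (Or.inr hv)
theorem Half.bD (h : Half G S a b D H) : b ∉ D := fun hb => h.dj b hb h.bH
theorem Half.aH (h : Half G S a b D H) : a ∉ H := h.dj a h.aD
theorem Half.finH (h : Half G S a b D H) (C : Ctx G S a b β) : H.Finite := C.fin.subset h.subH
theorem Half.finD (h : Half G S a b D H) (C : Ctx G S a b β) : D.Finite := C.fin.subset h.subD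

/-- a fragment of H has exits to D avoiding any given vertex -/
theorem Half.exits (h : Half G S a b D H) (C : Ctx G S a b β) (hf : Frag G H b Y c) (p : V) :
    ∃ u ∈ D, ∃ v ∈ Y, G.Adj u v ∧ u ≠ p := by
  obtain ⟨d, hd, hda⟩ := h.neD
  obtain ⟨v, hv, u, hu, hu1, hu2, hu3, hu4⟩ := C.L3 Y (hf.sub.trans h.subH) hf.ne
    (fun ha => h.aH (hf.sub ha)) hf.hb d (h.subD hd) (fun hd' => h.dj d hd (hf.sub hd')) hda
    (fun e => h.bD (e ▸ hd)) c p
  rcases (h.un u).1 hu with hD | hH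
  · exact ⟨u, hD, v, hv, hu2.symm, hu4⟩
  · rcases hf.cl v hv u hH hu2 with h1 | h1
    · exact absurd h1 hu1
    · exact absurd h1 hu3

theorem Half.frag_b (h : Half G S a b D H) (hf : Frag G H b Y b) : ∀ v ∈ H, v ≠ b → v ∈ Y := by
  intro v hv hvb
  obtain ⟨y, hy⟩ := hf.ne
  exact Cn.all h.cHb ⟨hf.sub hy, fun e => hf.hb ((e : y = b) ▸ hy)⟩ hy ⟨hv, hvb⟩
    (fun u hu _ w hw hadj => (hf.cl u hu w hw.1 hadj).resolve_right hw.2)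

theorem Half.fullb (h : Half G S a b D H) : FullF G H b (H \ {b}) b := by
  refine ⟨⟨?_, Set.sdiff_subset, fun h => h.2 rfl, h.bH, fun h => h.2 rfl, ?_⟩, ?_⟩
  · obtain ⟨d, h1, h2⟩ := h.neH; exact ⟨d, h1, h2⟩
  · intro u hu v hv hadj
    by_cases hvb : v = b
    · exact Or.inr hvb
    · exact Or.inl ⟨hv, hvb⟩
  · intro Y c hY y hy
    exact ⟨hY.1.sub hy, fun e => hY.1.hb ((e : y = b) ▸ hy)⟩

theorem Half.exists_MinF (h : Half G S a b D H) (C : Ctx G S a b β) : ∃ Y c, MinF G H b Y c := by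
  obtain ⟨Y, c, -, h1⟩ := h.fullb.1.exists_MinF (h.finH C)
  exact ⟨Y, c, h1⟩
theorem Half.exists_MinFull (h : Half G S a b D H) (C : Ctx G S a b β) : ∃ Y c, MinFull G H b Y c :=
  h.fullb.exists_Min (h.finH C)

theorem Half.unit (h : Half G S a b D H) (C : Ctx G S a b β) (hm : MinF G H b Y c) : Un G β H b Y c := by
  refine ⟨hm.1, fun u hu => ?_⟩
  have hub : ∀ w ∈ Y, w ≠ b := fun w hw e => hm.1.hb (e ▸ hw)
  have hua : ∀ w ∈ Y, w ≠ a := fun w hw e => h.aH (e ▸ hm.1.sub hw)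
  have hout : ∀ w ∈ Y, ∀ v ∈ S, v ∉ Y ∪ {c} → G.Adj w v → v ∈ D := by
    intro w hw v hv hvn hadj
    rcases (h.un v).1 hv with h1 | h1
    · exact h1
    · exact absurd (hm.1.cl w hw v h1 hadj) hvn
  by_cases h3 : ∃ w ∈ Y, w ≠ u
  · obtain ⟨w, hw, hwu⟩ := h3
    refine C.seg (Y ∪ {c}) ?_ c u (hm.linked hu) ⟨w, Or.inl hw, fun e => hm.1.hcY (e ▸ hw), hwu⟩ ?_
    · rintro v (hv | hv)
      · exact h.subH (hm.1.sub hv)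
      · rw [(hv : v = c)]; exact h.subH hm.1.hc
    · rintro w (hw | hw) h1 h2
      · refine ⟨hua w hw, hub w hw, fun v hv v' hv' hn hn' hadj hadj' => ?_⟩
        exact h.m w (hm.1.sub hw) (hub w hw) v (hout w hw v hv hn hadj) v'
          (hout w hw v' hv' hn' hadj') hadj hadj'
      · exact absurd hw h1
  · push Not at h3
    obtain ⟨u', hu', hadj⟩ := hm.1.exit h.bH h.cH
    rw [h3 u' hu'] at hadj
    have : ∃ p, ∀ v ∈ S, G.Adj u v → v = c ∨ v = p := by
      by_cases hp : ∃ p ∈ D, G.Adj u p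
      · obtain ⟨p, hp, hpa⟩ := hp
        refine ⟨p, fun v hv hadj => ?_⟩
        by_cases hvn : v ∈ Y ∪ {c}
        · rcases hvn with h1 | h1
          · rw [h3 v h1] at hadj; exact absurd hadj (G.loopless.irrefl u)
          · exact Or.inl h1
        · exact Or.inr (h.m u (hm.1.sub hu) (hub u hu) v (hout u hu v hv hvn hadj) p hp hadj hpa)
      · push Not at hp
        refine ⟨c, fun v hv hadj => Or.inl ?_⟩
        by_cases hvn : v ∈ Y ∪ {c}
        · rcases hvn with h1 | h1
          · rw [h3 v h1] at hadj; exact absurd hadj (G.loopless.irrefl u)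
          · exact h1
        · exact absurd hadj (hp v (hout u hu v hv hvn hadj))
    obtain ⟨p, hp⟩ := this
    exact ⟨1, C.one u (h.subH (hm.1.sub hu)) (hua u hu) (hub u hu) c p hadj hp,
      PT.adj hadj.symm (Or.inr rfl) (Or.inl hu)⟩

theorem adjUnits (C : Ctx G S a b β) (hD : D ⊆ S) (hH : H ⊆ S) (dj : ∀ v ∈ D, v ∉ H)
    (aD : a ∈ D) (bH : b ∈ H) (cD : Cn G D) (cH : Cn G H)
    (uX : Un G β D a X c) (uY : Un G β H b Y c') {u v : V} (hu : u ∈ X) (hv : v ∈ Y)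
    (hadj : G.Adj u v) (hne : c ≠ a ∨ c' ≠ b) : False := by
  obtain ⟨l0, p0⟩ := (uX.fr.compl_reach aD cD uX.fr.hc uX.fr.hcY).symm.PT
  obtain ⟨l2, p4⟩ := (uY.fr.compl_reach bH cH uY.fr.hc uY.fr.hcY).PT
  have sX := uX.fr.sub
  have sY := uY.fr.sub
  have hcD := uX.fr.hc
  have hcH := uY.fr.hc
  have hcX := uX.fr.hcY
  have hcY := uY.fr.hcY
  have key : 1 ≤ l0 ∨ 1 ≤ l2 := hne.imp (fun h => p0.pos h.symm) (fun h => p4.pos h)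
  refine C.comb p0 (uX.pl u hu) (PT.adj (W := {u, v}) hadj (by simp) (by simp))
    ((C.bsymm c' v) ▸ (uY.pl v hv).symm) p4 ?_ ?_ ?_ ?_ ?_ ?_ ?_ ?_ ?_ (by omega)
  · exact fun z hz => hD hz.1
  · rintro z (hz | rfl)
    · exact hD (sX hz)
    · exact hD hcD
  · rintro z (rfl | rfl)
    · exact hD (sX hu)
    · exact hH (sY hv)
  · rintro z (hz | rfl)
    · exact hH (sY hz)
    · exact hH hcH
  · exact fun z hz => hH hz.1
  · rintro z (hz | hz) h0
    · exact absurd hz h0.2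
    · exact hz
  · rintro z (rfl | rfl) h
    · rfl
    · exfalso
      have := sY hv
      rcases h with h | h | h
      · exact dj z h.1 this
      · exact dj z (sX h) this
      · exact dj z (by rw [(h : z = c)]; exact hcD) this
  · intro z hz h
    have hzH : z ∈ H := by
      rcases hz with hz | hz
      · exact sY hz
      · rw [(hz : z = c')]; exact hcH
    rcases h with h | (h | h) | (h | h)
    · exact absurd hzH (dj z h.1)
    · exact absurd hzH (dj z (sX h))
    · exact absurd hzH (dj z (by rw [(h : z = c)]; exact hcD))
    · exact absurd hzH (dj z (by rw [(h : z = u)]; exact sX hu))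
    · exact h
  · intro z hz h
    have hzH := hz.1
    rcases h with h | (h | h) | (h | h) | (h | h)
    · exact absurd hzH (dj z h.1)
    · exact absurd hzH (dj z (sX h))
    · exact absurd hzH (dj z (by rw [(h : z = c)]; exact hcD))
    · exact absurd hzH (dj z (by rw [(h : z = u)]; exact sX hu))
    · rw [(h : z = v)] at hz; exact absurd hv hz.2
    · exact absurd h hz.2
    · exact h

theorem kind2 (C : Ctx G S a b β) {D' W2 W3 : Set V} {u v s : V} (r0 : R G D' a u) (hua : u ≠ a)
    (hadj : G.Adj u v) (hv : v ∈ Y) (p1 : PL G (Y ∪ {c'}) v c' (β v c')) (r2 : R G W2 c' s)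
    (p3 : PL G W3 s b (β s b)) (s0 : D' ⊆ S) (sY : Y ⊆ S) (sc : c' ∈ S) (s2 : W2 ⊆ S) (s3 : W3 ⊆ S)
    (d1 : ∀ z ∈ Y, z ∉ D') (d1' : c' ∉ D') (hcY : c' ∉ Y)
    (d20 : ∀ z ∈ W2, z ∉ D') (d21 : ∀ z ∈ W2, z ∉ Y)
    (d30 : ∀ z ∈ W3, z ∉ D') (d31 : ∀ z ∈ W3, z ∉ Y) (d32 : ∀ z ∈ W3, z ∈ W2 → z = s) : False := by
  obtain ⟨l, p⟩ := r0.PT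
  have hl := p.pos hua.symm
  have p0 := p.join (PT.adj (W := {u, v}) hadj (by simp) (by simp)) (by
    rintro z hz (h | h)
    · exact h
    · rw [(h : z = v)] at hz; exact absurd hz (d1 v hv))
  obtain ⟨l1, p2⟩ := r2.PT
  refine C.comb p0 p1 p2 p3 (PT.refl (W := {b}) rfl) ?_ ?_ s2 s3 (by simpa using C.hb)
    ?_ ?_ ?_ ?_ (by omega)
  · rintro z (hz | (hz | hz))
    · exact s0 hz
    · rw [(hz : z = u)]; exact s0 r0.right
    · rw [(hz : z = v)]; exact sY hv
  · rintro z (hz | hz)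
    · exact sY hz
    · rw [(hz : z = c')]; exact sc
  · have : ∀ z ∈ Y ∪ {c'}, z ∉ D' := by
      rintro z (hz | hz)
      · exact d1 z hz
      · rwa [(hz : z = c')]
    rintro z hz (h | h | h)
    · exact absurd h (this z hz)
    · rw [(h : z = u)] at hz; exact absurd r0.right (this u hz)
    · exact h
  · rintro z hz ((h | h | h) | (h | h))
    · exact absurd h (d20 z hz)
    · rw [(h : z = u)] at hz; exact absurd r0.right (d20 u hz)
    · rw [(h : z = v)] at hz; exact absurd hv (d21 v hz)
    · exact absurd h (d21 z hz)
    · exact h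
  · rintro z hz ((h | h | h) | (h | h) | h)
    · exact absurd h (d30 z hz)
    · rw [(h : z = u)] at hz; exact absurd r0.right (d30 u hz)
    · rw [(h : z = v)] at hz; exact absurd hv (d31 v hz)
    · exact absurd h (d31 z hz)
    · rw [(h : z = c')] at hz ⊢; exact d32 c' hz r2.left
    · exact d32 z hz h
  · rintro z hz -
    exact hz

theorem Half.stem (h : Half G S a b D H) (C : Ctx G S a b β) {V0 : Set V} {t : V}
    (hF : MinFull G H b V0 t) : t = b ∨ ∀ v ∈ H, v ∈ V0 ∨ v = b ∨ v = t := by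
  by_contra hcon
  push Not at hcon
  obtain ⟨htb, e, heH, heV, heb, het⟩ := hcon
  have f0 := hF.1.1
  have hlink : Linked G (H \ V0) t b := by
    refine ⟨⟨f0.hc, f0.hcY⟩, ⟨h.bH, f0.hb⟩, htb, ?_⟩
    intro v z hz hzv
    by_contra hno
    push Not at hno
    have n1 := hno t (Or.inl rfl)
    have n2 := hno b (Or.inr rfl)
    by_cases hv : v ∈ H \ V0
    · have : Frag G H b {y | R G ((H \ V0) \ {v}) z y} v := by
        refine ⟨⟨z, R.refl ⟨hz, hzv⟩⟩, fun y hy => hy.right.1.1, n2, hv.1, fun h => h.right.2 rfl, ?_⟩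
        intro x hx w hw hadj
        by_cases hwv : w = v
        · exact Or.inr hwv
        left
        by_cases hwV : w ∈ V0
        · have := (f0.cl w hwV x hx.right.1.1 hadj.symm).resolve_left hx.right.1.2
          subst this; exact absurd hx n1
        · exact R.snoc hx hadj ⟨⟨hw, hwV⟩, hwv⟩
      obtain ⟨Y, c, hs, hY⟩ := this.exists_MinF (h.finH C)
      obtain ⟨y, hy⟩ := hY.1.ne
      exact (hs hy).right.1.2 (hF.1.2 _ _ hY hy)
    · refine n2 (((f0.compl_Cn h.bH h.cH) z hz b ⟨h.bH, f0.hb⟩).mono ?_)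
      exact fun w hw => ⟨hw, fun e => hv ((e : w = v) ▸ hw)⟩
  have hpl : PL G (H \ V0) t b (β t b) := by
    refine C.seg _ (fun v hv => h.subH hv.1) t b hlink ⟨e, ⟨heH, heV⟩, het, heb⟩ ?_
    intro w hw hwt hwb
    refine ⟨fun e => h.aH (e ▸ hw.1), hwb, ?_⟩
    have : ∀ v ∈ S, v ∉ H \ V0 → G.Adj w v → v ∈ D := by
      intro v hv hvn hadj
      rcases (h.un v).1 hv with h1 | h1
      · exact h1
      · by_cases hvV : v ∈ V0
        · exact absurd ((f0.cl v hvV w hw.1 hadj.symm).resolve_left hw.2) hwt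
        · exact absurd ⟨h1, hvV⟩ hvn
    exact fun v hv v' hv' hn hn' ad ad' => h.m w hw.1 hwb v (this v hv hn ad) v' (this v' hv' hn' ad') ad ad'
  obtain ⟨Y, c', hY⟩ := h.exists_MinF C
  have hYV := hF.1.2 _ _ hY
  have uY := h.unit C hY
  obtain ⟨u, hu, v, hv, hadj, hua⟩ := h.exits C hY.1 a
  have hr2 : R G ((V0 ∪ {t}) \ Y) c' t := by
    obtain ⟨y, hy, hyc⟩ := hY.1.exit h.bH h.cH
    rcases f0.cl y (hYV hy) c' hY.1.hc hyc with h1 | h1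
    · obtain ⟨p, q, r, p1, p2, p3, p4, p5⟩ :=
        (hY.1.compl_reach h.bH h.cH hY.1.hc hY.1.hcY).exit V0 h1 f0.hb
      have hq := (f0.cl p p1 q p3.1 p5).resolve_left p4
      subst hq
      exact R.snoc (r.mono (fun z hz => ⟨Or.inl hz.2, hz.1.2⟩)) p5 ⟨Or.inr rfl, p3.2⟩
    · subst h1; exact R.refl ⟨Or.inr rfl, hY.1.hcY⟩
  have sub2 : (V0 ∪ {t}) \ Y ⊆ H := by
    rintro z ⟨hz | hz, -⟩
    · exact f0.sub hz
    · rw [(hz : z = t)]; exact f0.hc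
  refine kind2 C (h.cD a h.aD u hu) hua hadj hv ((C.bsymm c' v) ▸ (uY.pl v hv).symm) hr2 hpl
    h.subD (hY.1.sub.trans h.subH) (h.subH hY.1.hc) (sub2.trans h.subH) (fun z hz => h.subH hz.1)
    (fun z hz hd => h.dj z hd (hY.1.sub hz)) (fun hd => h.dj _ hd hY.1.hc) hY.1.hcY
    (fun z hz hd => h.dj z hd (sub2 hz)) (fun z hz => hz.2)
    (fun z hz hd => h.dj z hd hz.1) (fun z hz hy => hz.2 (hYV hy)) ?_
  rintro z hz ⟨h1 | h1, -⟩
  · exact absurd h1 hz.2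
  · exact h1

theorem segL (C : Ctx G S a b β) {Z : Set V} {x y e : V} (sZ : Z ⊆ S) (hne : Z.Nonempty)
    (aZ : a ∉ Z) (bZ : b ∉ Z) (hx : x ∈ S) (hy : y ∈ S) (hxZ : x ∉ Z) (hyZ : y ∉ Z) (hxy : x ≠ y)
    (he : e ∈ S) (heZ : e ∉ Z) (hea : e ≠ a) (heb : e ≠ b)
    (hN : ∀ u ∈ Z, ∀ v ∈ S, G.Adj u v → v ∈ Z ∨ v = e ∨ v = x ∨ v = y) :
    PL G (Z ∪ {x, y}) x y (β x y) := by
  have hlink : Linked G (Z ∪ {x, y}) x y := by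
    refine ⟨by simp, by simp, hxy, ?_⟩
    intro v z hz hzv
    by_contra hno
    push Not at hno
    have n1 := hno x (Or.inl rfl)
    have n2 := hno y (Or.inr rfl)
    have hsub : {w | R G ((Z ∪ {x, y}) \ {v}) z w} ⊆ Z := by
      intro w hw
      rcases hw.right.1 with h1 | h1 | h1
      · exact h1
      · rw [(h1 : w = x)] at hw; exact absurd hw n1
      · rw [(h1 : w = y)] at hw; exact absurd hw n2
    obtain ⟨p, hp, q, hq, hq1, hq2, hq3, hq4⟩ := C.L3 {w | R G ((Z ∪ {x, y}) \ {v}) z w}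
      (hsub.trans sZ) ⟨z, R.refl ⟨hz, hzv⟩⟩ (fun h => aZ (hsub h)) (fun h => bZ (hsub h)) e he
      (fun h => heZ (hsub h)) hea heb v e
    apply hq1
    refine R.snoc hp hq2 ⟨?_, hq3⟩
    rcases hN p (hsub hp) q hq hq2 with h1 | h1 | h1 | h1
    · exact Or.inl h1
    · exact absurd h1 hq4
    · exact Or.inr (Or.inl h1)
    · exact Or.inr (Or.inr h1)
  obtain ⟨w, hw⟩ := hne
  refine C.seg _ ?_ x y hlink ⟨w, Or.inl hw, fun e => hxZ (e ▸ hw), fun e => hyZ (e ▸ hw)⟩ ?_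
  · rintro v (hv | hv | hv)
    · exact sZ hv
    · rwa [(hv : v = x)]
    · rwa [(hv : v = y)]
  · rintro w (hw | hw | hw) h1 h2
    · refine ⟨fun e => aZ (e ▸ hw), fun e => bZ (e ▸ hw), ?_⟩
      have : ∀ v ∈ S, v ∉ Z ∪ {x, y} → G.Adj w v → v = e := by
        intro v hv hvn hadj
        rcases hN w hw v hv hadj with h | h | h | h
        · exact absurd (Or.inl h) hvn
        · exact h
        · exact absurd (Or.inr (Or.inl h)) hvn
        · exact absurd (Or.inr (Or.inr h)) hvn
      intro v hv v' hv' hn hn' ad ad'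
      rw [this v hv hn ad, this v' hv' hn' ad']
    · exact absurd hw h1
    · exact absurd hw h2

theorem Half.adjUnits (h : Half G S a b D H) (C : Ctx G S a b β) 
    (uX : Un G β D a X c) (uY : Un G β H b Y c') {u v : V} (hu : u ∈ X) (hv : v ∈ Y)
    (hadj : G.Adj u v) (hne : c ≠ a ∨ c' ≠ b) : False :=
  GP.adjUnits C h.subD h.subH h.dj h.aD h.bH h.cD h.cH uX uY hu hv hadj hne

theorem Half.special (h : Half G S a b D H) (C : Ctx G S a b β) (uX : Un G β D a X c) (hca : c ≠ a)
    (hY : MinF G H b Y c') (hcb : c' ≠ b) (hH : ∀ v ∈ H, v ∈ Y ∨ v = b ∨ v = c') : False := by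
  have uY := h.unit C hY
  have fX := uX.fr
  by_cases hadj : ∃ u ∈ X, ∃ v ∈ Y, G.Adj u v
  · obtain ⟨u, hu, v, hv, hadj⟩ := hadj
    exact h.adjUnits C uX uY hu hv hadj (Or.inl hca)
  push Not at hadj
  have hXH : ∀ z ∈ X, z ∉ H := fun z hz => h.dj z (fX.sub hz)
  have hpl : PL G (X ∪ {c', b}) c' b (β c' b) := by
    refine segL C (e := c) (fX.sub.trans h.subD) fX.ne fX.hb (fun hb => h.bD (fX.sub hb))
      (h.subH hY.1.hc) C.hb (fun hc => hXH _ hc hY.1.hc) (fun hb => h.bD (fX.sub hb)) hcb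
      (h.subD fX.hc) fX.hcY hca (fun e => h.bD (e ▸ fX.hc)) ?_
    intro u hu v hv ad
    rcases (h.un v).1 hv with h1 | h1
    · rcases fX.cl u hu v h1 ad with h2 | h2
      · exact Or.inl h2
      · exact Or.inr (Or.inl h2)
    · rcases hH v h1 with h2 | h2 | h2
      · exact absurd ad (hadj u hu v h2)
      · exact Or.inr (Or.inr (Or.inr h2))
      · exact Or.inr (Or.inr (Or.inl h2))
  obtain ⟨u, hu, v, hv, ad, hua⟩ := h.exits C hY.1 a
  have huX : u ∉ X := fun hX => hadj u hX v hv ad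
  have hHX : ∀ z ∈ H, z ∉ D \ X := fun z hz hd => h.dj z hd.1 hz
  refine kind2 C (D' := D \ X) (W2 := {c'}) (fX.compl_reach h.aD h.cD hu huX).symm hua ad hv
    ((C.bsymm c' v) ▸ (uY.pl v hv).symm) (R.refl rfl) hpl (fun z hz => h.subD hz.1)
    (hY.1.sub.trans h.subH) (h.subH hY.1.hc) (by simpa using h.subH hY.1.hc) ?_
    (fun z hz => hHX z (hY.1.sub hz)) (hHX _ hY.1.hc) hY.1.hcY ?_ ?_ ?_ ?_ ?_
  · rintro z (hz | hz | hz)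
    · exact h.subD (fX.sub hz)
    · rw [(hz : z = c')]; exact h.subH hY.1.hc
    · rw [(hz : z = b)]; exact C.hb
  · rintro z rfl; exact hHX _ hY.1.hc
  · rintro z rfl; exact hY.1.hcY
  · rintro z (hz | hz | hz)
    · exact fun hd => hd.2 hz
    · rw [(hz : z = c')]; exact hHX _ hY.1.hc
    · rw [(hz : z = b)]; exact hHX _ h.bH
  · rintro z (hz | hz | hz)
    · exact fun hy => hXH z hz (hY.1.sub hy)
    · rw [(hz : z = c')]; exact hY.1.hcY
    · rw [(hz : z = b)]; exact hY.1.hb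
  · rintro z - hz; exact hz

end GP

set_option linter.unusedVariables false
set_option linter.unusedSimpArgs false
namespace GP
open SimpleGraph
variable {V : Type*} {G : SimpleGraph V} {S : Set V} {a b : V} {β : V → V → ℕ}
variable {D H X Y : Set V} {c c' : V}

theorem weave (C : Ctx G S a b β) (hD : D ⊆ S) (hH : H ⊆ S) (dj : ∀ v ∈ D, v ∉ H)
    {P1 P2 Q1 Q2 Yi Yj : Set V} (sP1 : P1 ⊆ D) (sP2 : P2 ⊆ D) (sQ1 : Q1 ⊆ H) (sQ2 : Q2 ⊆ H)
    (sYi : Yi ⊆ H) (sYj : Yj ⊆ H) (dP : ∀ v ∈ P1, v ∉ P2) (dQ : ∀ v ∈ Q1, v ∉ Q2)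
    (dY : ∀ v ∈ Yi, v ∉ Yj) (d1 : ∀ v ∈ Q1, v ∉ Yi) (d2 : ∀ v ∈ Q1, v ∉ Yj)
    (d3 : ∀ v ∈ Q2, v ∉ Yi) (d4 : ∀ v ∈ Q2, v ∉ Yj) {ui vi uj vj z w ci cj : V}
    (hvi : vi ∈ Yi) (hvj : vj ∈ Yj) (ai : G.Adj ui vi) (aj : G.Adj uj vj) (az : G.Adj z w)
    (pi : PL G (Yi ∪ {ci}) vi ci (β vi ci)) (pj : PL G (Yj ∪ {cj}) vj cj (β vj cj))
    (q1 : R G Q1 ci b) (q2 : R G Q2 w cj)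
    (hr : (R G P1 a z ∧ R G P2 uj ui) ∨ (R G P1 a uj ∧ R G P2 z ui)) : False := by
  have hci := q1.left
  have hcj := q2.right
  have hw := q2.left
  have hb := q1.right
  obtain ⟨l2, p4⟩ := q1.PT
  rcases hr with ⟨r1, r2⟩ | ⟨r1, r2⟩
  · have ha := r1.left
    have hz := r1.right
    have huj := r2.left
    have hui := r2.right
    have e0 : R G (P1 ∪ Q2) a cj :=
      ((r1.mono Set.subset_union_left).snoc az (Or.inr hw)).trans (q2.mono Set.subset_union_right)
    have e2 : R G (P2 ∪ {vi, vj}) vj vi :=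
      (R.cons aj.symm (by simp) (r2.mono Set.subset_union_left)).snoc ai (by simp)
    obtain ⟨l0, p0⟩ := e0.PT
    obtain ⟨l1, p2⟩ := e2.PT
    have h0 : 1 ≤ l0 := p0.pos (by rintro rfl; exact dj _ (sP1 ha) (sQ2 hcj))
    have h1 : 1 ≤ l1 := p2.pos (by rintro rfl; exact dY _ hvi hvj)
    refine C.comb p0 ((C.bsymm vj cj) ▸ pj.symm) p2 pi p4 ?_ ?_ ?_ ?_ ?_ ?_ ?_ ?_ ?_ (by omega)
    all_goals intro v; (try simp only [Set.mem_union, Set.mem_singleton_iff, Set.mem_insert_iff]); grind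
  · have ha := r1.left
    have hz := r2.left
    have huj := r1.right
    have hui := r2.right
    have e0 : R G (P1 ∪ {vj}) a vj := (r1.mono Set.subset_union_left).snoc aj (by simp)
    have e2 : R G (Q2 ∪ P2 ∪ {vi}) cj vi :=
      ((q2.symm.mono (by grind)).trans (R.cons az.symm (by grind)
        (r2.mono (by grind)))).snoc ai (by simp)
    obtain ⟨l0, p0⟩ := e0.PT
    obtain ⟨l1, p2⟩ := e2.PT
    have h0 : 1 ≤ l0 := p0.pos (by rintro rfl; exact dj _ (sP1 ha) (sYj hvj))
    have h1 : 1 ≤ l1 := p2.pos (by rintro rfl; exact d3 _ hcj hvi)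
    refine C.comb p0 pj p2 pi p4 ?_ ?_ ?_ ?_ ?_ ?_ ?_ ?_ ?_ (by omega)
    all_goals intro v; (try simp only [Set.mem_union, Set.mem_singleton_iff, Set.mem_insert_iff]); grind

/-- Case 1 -/
theorem Half.case1 (h : Half G S a b D H) (h' : Half G S b a H D) (C : Ctx G S a b β)
    (hX : ∃ X, MinF G D a X a) : ∃ Y, MinF G H b Y b := by
  obtain ⟨X, hX⟩ := hX
  obtain ⟨Y, c, hY⟩ := h.exists_MinF C
  by_cases hc : c = b
  · subst hc; exact ⟨Y, hY⟩
  obtain ⟨u, hu, v, hv, ad, hua⟩ := h.exits C hY.1 a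
  exact (h.adjUnits C (h'.unit C.symm hX) (h.unit C hY) (h'.frag_b hX.1 u hu hua) hv ad (Or.inr hc)).elim

/-- unique minimal fragment is a minimal full fragment -/
theorem MinF.minFull (h : MinF G H b Y c) (hu : ∀ Y' c', MinF G H b Y' c' → Y' = Y) :
    MinFull G H b Y c :=
  ⟨⟨h.1, fun Y' c' h' => (hu Y' c' h').subset⟩, fun Y' c' h' hs => h.2 _ _ h'.1 hs⟩

theorem Half.case21 (h : Half G S a b D H) (h' : Half G S b a H D) (C : Ctx G S a b β)
    (nA : ∀ X, ¬ MinF G D a X a) (nB : ∀ Y, ¬ MinF G H b Y b)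
    (hX : MinF G D a X c) (hu : ∀ X' c', MinF G D a X' c' → X' = X) : False := by
  have hca : c ≠ a := by rintro rfl; exact nA _ hX
  have hD := (h'.stem C.symm (hX.minFull hu)).resolve_left hca
  have uX := h'.unit C.symm hX
  have key : ∀ Y c', MinF G H b Y c' → ∃ v ∈ Y, G.Adj c v := by
    intro Y c' hY
    obtain ⟨u, hu, v, hv, ad, hua⟩ := h.exits C hY.1 a
    rcases hD u hu with h1 | h1 | h1
    · exact (h.adjUnits C uX (h.unit C hY) h1 hv ad (Or.inl hca)).elim
    · exact absurd h1 hua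
    · subst h1; exact ⟨v, hv, ad⟩
  obtain ⟨Y, c', hY⟩ := h.exists_MinF C
  have hcb : c' ≠ b := by rintro rfl; exact nB _ hY
  have huY : ∀ Y' c', MinF G H b Y' c' → Y' = Y := by
    intro Y' c'' hY'
    obtain ⟨v, hv, ad⟩ := key Y c' hY
    obtain ⟨v', hv', ad'⟩ := key Y' c'' hY'
    have := h'.m c hX.1.hc hca v (hY.1.sub hv) v' (hY'.1.sub hv') ad ad'
    subst this
    exact hY'.eq hY h.bH h.cH hv' hv
  exact h.special C uX hca hY hcb ((h.stem C (hY.minFull huY)).resolve_left hcb)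

def Full (G : SimpleGraph V) (H : Set V) (b : V) (W : Set V) : Prop :=
  ∀ Y c, MinF G H b Y c → Y ⊆ W

structure MaxNF (G : SimpleGraph V) (H : Set V) (b : V) (W : Set V) (z : V) : Prop where
  fr : Frag G H b W z
  nf : ¬ Full G H b W
  mx : ∀ W' z', Frag G H b W' z' → W ⊆ W' → ¬ Full G H b W' → W' = W

theorem Frag.exists_MaxNF (hf : H.Finite) {W : Set V} {z : V} (h : Frag G H b W z)
    (hn : ¬ Full G H b W) : ∃ W' z', W ⊆ W' ∧ MaxNF G H b W' z' := by
  induction hk : H.ncard - W.ncard using Nat.strong_induction_on generalizing W z with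
  | _ n ih =>
  by_cases hm : MaxNF G H b W z
  · exact ⟨W, z, subset_rfl, hm⟩
  have : ∃ W' z', Frag G H b W' z' ∧ W ⊆ W' ∧ ¬ Full G H b W' ∧ W' ≠ W := by
    by_contra hcon
    push Not at hcon
    exact hm ⟨h, hn, fun W' z' => hcon W' z'⟩
  obtain ⟨W', z', h1, h2, h3, h4⟩ := this
  have hlt : W.ncard < W'.ncard := Set.ncard_lt_ncard (h2.ssubset_of_ne h4.symm) (hf.subset h1.sub)
  have hle : W'.ncard ≤ H.ncard := Set.ncard_le_ncard h1.sub hf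
  obtain ⟨W'', z'', h5, h6⟩ := ih (H.ncard - W'.ncard) (by omega) h1 h3 rfl
  exact ⟨W'', z'', h2.trans h5, h6⟩

variable {A B W : Set V} {z : V}

theorem Half.NF_ne (h' : Half G S b a B A) (hW : Frag G A a W z) (hn : ¬ Full G A a W) : z ≠ a := by
  rintro rfl
  exact hn fun Y c hY y hy =>
    h'.frag_b hW y (hY.1.sub hy) (fun e => hY.1.hb (e ▸ hy))

/-- component of a fragment -/
theorem Frag.cmp (hW : Frag G A a W z) {x : V} (hx : x ∈ W) : Frag G A a {y | R G W x y} z := by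
  refine ⟨⟨x, R.refl hx⟩, fun y hy => hW.sub hy.right, fun h => hW.hb h.right, hW.hc,
    fun h => hW.hcY h.right, ?_⟩
  intro u hu v hv ad
  rcases hW.cl u hu.right v hv ad with h | h
  · exact Or.inl (R.snoc hu ad h)
  · exact Or.inr h

/-- moving a nonfull fragment across the cut -/
theorem Half.move (h : Half G S a b A B) (h' : Half G S b a B A) (C : Ctx G S a b β)
    (hW : Frag G A a W z) (hn : ¬ Full G A a W) : Half G S a b (A \ W) (B ∪ W) := by
  have hza := h'.NF_ne hW hn
  have toB : ∀ x ∈ W, ∃ u ∈ B, u ≠ b ∧ R G (W ∪ {u}) x u := by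
    intro x hx
    obtain ⟨u, hu, v, hv, ad, hub⟩ := h'.exits C.symm (hW.cmp hx) b
    exact ⟨u, hu, hub, (R.mono hv Set.subset_union_left).snoc ad.symm (Or.inr rfl)⟩
  have hbW : b ∉ W := fun hb => h.bD (hW.sub hb)
  have cHb : Cn G ((B ∪ W) \ {b}) := by
    have key : ∀ x ∈ (B ∪ W) \ {b}, ∃ u ∈ B, u ≠ b ∧ R G ((B ∪ W) \ {b}) x u := by
      rintro x ⟨hx | hx, hxb⟩
      · exact ⟨x, hx, hxb, R.refl ⟨Or.inl hx, hxb⟩⟩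
      · obtain ⟨u, hu, hub, hr⟩ := toB x hx
        refine ⟨u, hu, hub, hr.mono ?_⟩
        intro v; simp only [Set.mem_union, Set.mem_singleton_iff, Set.mem_sdiff]; grind
    intro x hx y hy
    obtain ⟨u, hu, hub, hr⟩ := key x hx
    obtain ⟨u', hu', hub', hr'⟩ := key y hy
    exact (hr.trans ((h.cHb u ⟨hu, hub⟩ u' ⟨hu', hub'⟩).mono (fun v hv => ⟨Or.inl hv.1, hv.2⟩))).trans
      hr'.symm
  have cH : Cn G (B ∪ W) := by
    have key : ∀ x ∈ B ∪ W, R G (B ∪ W) x b := by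
      rintro x (hx | hx)
      · exact (h.cH x hx b h.bH).mono Set.subset_union_left
      · obtain ⟨u, hu, hub, hr⟩ := toB x hx
        refine (hr.mono ?_).trans ((h.cH u hu b h.bH).mono Set.subset_union_left)
        intro v; simp only [Set.mem_union, Set.mem_singleton_iff]; grind
    exact fun x hx y hy => (key x hx).trans (key y hy).symm
  refine ⟨⟨h.aD, hW.hb⟩, Or.inl h.bH, ?_, ?_, hW.compl_Cn h.aD h.cD, cH, ?_, cHb, ⟨z, ⟨hW.hc, hW.hcY⟩, hza⟩,
    ?_, ?_⟩
  · rintro v ⟨h1, h2⟩ (h3 | h3)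
    · exact h.dj v h1 h3
    · exact h2 h3
  · intro v
    have := h.un v
    have := @hW.sub v
    simp only [Set.mem_union, Set.mem_sdiff]; grind
  · have hz : z ∈ A \ {a} := ⟨hW.hc, hza⟩
    have f : Frag G (A \ {a}) z W z :=
      ⟨hW.ne, fun y hy => ⟨hW.sub hy, fun e => hW.hb ((e : y = a) ▸ hy)⟩, hW.hcY, hz, hW.hcY,
        fun u hu v hv => hW.cl u hu v hv.1⟩
    have := f.compl_Cn hz h.cDa
    rwa [show (A \ W) \ {a} = (A \ {a}) \ W by ext; simp; tauto]
  · obtain ⟨d, h1, h2⟩ := h.neH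
    exact ⟨d, Or.inl h1, h2⟩
  · rintro v (hv | hv) hvb u hu u' hu' ad ad'
    · exact h.m v hv hvb u hu.1 u' hu'.1 ad ad'
    · rw [(hW.cl v hv u hu.1 ad).resolve_left hu.2, (hW.cl v hv u' hu'.1 ad').resolve_left hu'.2]

end GP

set_option linter.unusedVariables false
set_option linter.unusedSimpArgs false
namespace GP
open SimpleGraph
variable {V : Type*} {G : SimpleGraph V} {S : Set V} {a b : V} {β : V → V → ℕ}
variable {D H X Y V0 : Set V} {c c' t : V}

theorem Half.stem_all (h : Half G S a b D H) (C : Ctx G S a b β) (hF : MinFull G H b V0 t) :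
    ∀ v ∈ H, v ∈ V0 ∨ v = b ∨ v = t := by
  rcases h.stem C hF with h1 | h1
  · subst h1
    intro v hv
    by_cases hvb : v = t
    · exact Or.inr (Or.inl hvb)
    · exact Or.inl (h.frag_b hF.1.1 v hv hvb)
  · exact h1

theorem Half.stem_nbr (h : Half G S a b D H) (C : Ctx G S a b β) (hF : MinFull G H b V0 t)
    (htb : t ≠ b) {v : V} (hv : v ∈ H) (ad : G.Adj b v) : v = t := by
  rcases h.stem_all C hF v hv with h1 | h1 | h1
  · rcases hF.1.1.cl v h1 b h.bH ad.symm with h2 | h2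
    · exact absurd h2 hF.1.1.hb
    · exact absurd h2.symm htb
  · subst h1; exact absurd ad (G.loopless.irrefl v)
  · exact h1

theorem Half.stem_sub (h : Half G S a b D H) (C : Ctx G S a b β) (hF : MinFull G H b V0 t)
    {B : Set V} (sB : B ⊆ H) (cB : Cn G B) (bB : b ∈ B) (hd : ∃ d ∈ B, d ≠ b) :
    t ∈ B ∧ R G {t, b} t b := by
  by_cases htb : t = b
  · subst htb; exact ⟨bB, R.refl (by simp)⟩
  obtain ⟨d, hd, hdb⟩ := hd
  obtain ⟨u, v, -, h1, h2, h3, h4, h5⟩ := (cB b bB d hd).exit {b} rfl hdb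
  have : u = b := h1
  subst this
  have := h.stem_nbr C hF htb (sB h3) h5
  subst this
  exact ⟨h3, R.adj h5.symm (by simp) (by simp)⟩

theorem Half.Q (h : Half G S a b D H) (C : Ctx G S a b β) (nb : ∀ Y c, MinF G H b Y c → c ≠ b)
    (hY : MinF G H b Y c) {Y2 : Set V} {c2 : V} (hY2 : MinF G H b Y2 c2) (hne : Y2 ≠ Y) (p : V) :
    ∃ u ∈ D, ∃ v ∈ Y, G.Adj u v ∧ u ≠ a ∧ u ≠ p := by
  by_contra hcon
  push Not at hcon
  obtain ⟨u, hu, v, hv, ad, hua⟩ := h.exits C hY.1 a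
  have hup := hcon u hu v hv ad hua
  subst hup
  have hdis : ∀ x ∈ Y, x ∉ Y2 := fun x h1 h2 => hne (hY2.eq hY h.bH h.cH h2 h1)
  have hc2Y : c2 ∉ Y := hY2.1.attach_notin hY.1 h.bH h.cH (fun x h1 h2 => hdis x h2 h1)
  have hYD : ∀ x ∈ Y, x ∉ D := fun x hx hd => h.dj x hd (hY.1.sub hx)
  have hY2D : ∀ x ∈ Y2, x ∉ D := fun x hx hd => h.dj x hd (hY2.1.sub hx)
  have hc2D : c2 ∉ D := fun hd => h.dj _ hd hY2.1.hc
  have p1 : PL G (Y ∪ {a, u}) a u (β a u) := by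
    refine segL C (e := c) (hY.1.sub.trans h.subH) hY.1.ne (fun ha => h.aH (hY.1.sub ha)) hY.1.hb
      C.ha (h.subD hu) (fun ha => h.aH (hY.1.sub ha)) (fun hy => hYD u hy hu) hua.symm
      (h.subH hY.1.hc) hY.1.hcY (fun e => h.aH (e ▸ hY.1.hc)) (nb _ _ hY) ?_
    intro x hx y hy ad
    rcases (h.un y).1 hy with h1 | h1
    · by_cases hya : y = a
      · exact Or.inr (Or.inr (Or.inl hya))
      · exact Or.inr (Or.inr (Or.inr (hcon y h1 x hx ad.symm hya)))
    · rcases hY.1.cl x hx y h1 ad with h2 | h2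
      · exact Or.inl h2
      · exact Or.inr (Or.inl h2)
  obtain ⟨uj, huj, vj, hvj, adj, huja⟩ := h.exits C hY2.1 a
  obtain ⟨l1, p2⟩ := (((h.cDa u ⟨hu, hua⟩ uj ⟨huj, huja⟩).mono
    (Set.subset_union_left (t := {vj}))).snoc adj (Or.inr rfl)).PT
  obtain ⟨l2, p4⟩ := (hY.1.two_reach hY2.1 h.bH h.cH hdis hY2.1.hc hc2Y hY2.1.hcY).PT
  have e1 : 1 ≤ l1 := p2.pos (by rintro rfl; exact hY2D _ hvj hu)
  have e2 : 1 ≤ l2 := p4.pos (nb _ _ hY2)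
  have q3 : PL G (Y2 ∪ {c2}) vj c2 (β vj c2) := (C.bsymm c2 vj) ▸ ((h.unit C hY2).pl vj hvj).symm
  have s1 := h.subD
  have s2 := h.subH
  have s3 := hY.1.sub
  have s4 := hY2.1.sub
  have s5 := hY2.1.hc
  have s6 := C.ha
  have s7 := h.aD
  have s8 := h.dj
  refine C.comb (PT.refl (W := {a}) rfl) p1 p2 q3 p4 ?_ ?_ ?_ ?_ ?_ ?_ ?_ ?_ ?_ (by omega)
  all_goals intro v; (try simp only [Set.mem_union, Set.mem_singleton_iff, Set.mem_insert_iff, Set.mem_sdiff]); grind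

theorem Half.loc4 (h : Half G S a b D H) (C : Ctx G S a b β) (hF : MinFull G H b V0 t)
    (two : ∀ Y c, MinF G H b Y c → ∃ Y2 c2, MinF G H b Y2 c2 ∧ Y2 ≠ Y)
    {w : V} (hw : w ∈ V0) (hwn : ∀ Y c, MinF G H b Y c → w ∉ Y) :
    ∃ (N1 N2 Yi Yj : Set V) (ci cj : V), MinF G H b Yi ci ∧ MinF G H b Yj cj ∧ Yi ≠ Yj ∧
      N1 ⊆ V0 ∪ {t} ∧ N2 ⊆ V0 ∪ {t} ∧ (∀ v ∈ N1, v ∉ N2) ∧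
      (∀ v ∈ N1, ∀ Y c, MinF G H b Y c → v ∉ Y) ∧ (∀ v ∈ N2, ∀ Y c, MinF G H b Y c → v ∉ Y) ∧
      R G N1 t ci ∧ R G N2 w cj := by
  have f0 := hF.1.1
  let Ys : Set V := {v | ∃ Y c, MinF G H b Y c ∧ v ∈ Y}
  have hYs : Ys ⊆ V0 := by
    rintro v ⟨Y, c, hY, hv⟩; exact hF.1.2 _ _ hY hv
  have sH : V0 ∪ {t} ⊆ H := by
    rintro v (hv | hv)
    · exact f0.sub hv
    · rw [(hv : v = t)]; exact f0.hc
  have toT : ∀ (U : Set V), ∀ y ∈ V0, R G (H \ U) y b → R G ((V0 ∪ {t}) \ U) y t := by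
    intro U y hy hr
    obtain ⟨p, q, r, p1, p2, p3, p4, p5⟩ := hr.exit V0 hy f0.hb
    have hq := (f0.cl p p1 q p3.1 p5).resolve_left p4
    subst hq
    exact R.snoc (r.mono (fun z hz => ⟨Or.inl hz.2, hz.1.2⟩)) p5 ⟨Or.inr rfl, p3.2⟩
  obtain ⟨Y0, c0, hY0⟩ := h.exists_MinF C
  obtain ⟨y0, hy0⟩ := hY0.1.ne
  have hsep : ∀ s, ∃ x, (x = t ∨ x = w) ∧ ∃ y ∈ Ys, R G ((V0 ∪ {t}) \ {s}) x y := by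
    intro s
    by_cases hst : s = t
    · subst hst
      have hws : w ≠ s := fun e => f0.hcY (e ▸ hw)
      have := Frag.comp (G := G) (b := b) f0.hc (f0.sub hw) hws (fun hr => f0.hb (f0.reach hw hr).1)
      obtain ⟨Y, c, hs, hY⟩ := this.exists_MinF (h.finH C)
      obtain ⟨y, hy⟩ := hY.1.ne
      refine ⟨w, Or.inr rfl, y, ⟨Y, c, hY, hy⟩, (f0.reach hw (hs hy)).2.mono ?_⟩
      exact fun v hv => ⟨Or.inl hv, fun e => f0.hcY ((e : v = s) ▸ hv)⟩
    by_contra hcon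
    push Not at hcon
    have hno := hcon t (Or.inl rfl)
    by_cases hsV : s ∈ V0
    swap
    · have := toT ∅ y0 (hF.1.2 _ _ hY0 hy0) ((h.cH _ (hY0.1.sub hy0) _ h.bH).mono (by simp))
      refine hno y0 ⟨Y0, c0, hY0, hy0⟩ (this.symm.mono ?_)
      rintro v ⟨hv, -⟩
      refine ⟨hv, fun e => ?_⟩
      have e : v = s := e
      subst e
      rcases hv with hv | hv
      · exact hsV hv
      · exact hst hv
    by_cases hsY : s ∈ Ys
    · obtain ⟨Yi, ci, hYi, hsi⟩ := hsY
      obtain ⟨Yj, cj, hYj, hne⟩ := two Yi ci hYi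
      obtain ⟨y, hy⟩ := hYj.1.ne
      have hyi : y ∉ Yi := fun h1 => hne (hYj.eq hYi h.bH h.cH hy h1)
      have := toT Yi y (hF.1.2 _ _ hYj hy) (hYi.1.compl_reach h.bH h.cH (hYj.1.sub hy) hyi)
      refine hno y ⟨Yj, cj, hYj, hy⟩ (this.symm.mono ?_)
      exact fun v hv => ⟨hv.1, fun e => hv.2 ((e : v = s) ▸ hsi)⟩
    · let P : Set V := {v | v ∈ V0 ∧ v ≠ s ∧ ¬ R G ((V0 ∪ {t}) \ {s}) t v}
      have hYP : Ys ⊆ P := fun v hv => ⟨hYs hv, fun e => hsY (e ▸ hv), hno v hv⟩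
      have hP : FullF G H b P s := by
        refine ⟨⟨⟨y0, hYP ⟨Y0, c0, hY0, hy0⟩⟩, fun v hv => f0.sub hv.1, fun hb => f0.hb hb.1,
          f0.sub hsV, fun hs => hs.2.1 rfl, ?_⟩, fun Y c hY y hy => hYP ⟨Y, c, hY, hy⟩⟩
        intro u hu v hv ad
        by_cases hvs : v = s
        · exact Or.inr hvs
        left
        have hv1 : v ∈ V0 ∪ {t} := f0.cl u hu.1 v hv ad
        have hnr : ¬ R G ((V0 ∪ {t}) \ {s}) t v := fun hr =>
          hu.2.2 (hr.snoc ad.symm ⟨Or.inl hu.1, hu.2.1⟩)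
        rcases hv1 with h1 | h1
        · exact ⟨h1, hvs, hnr⟩
        · rw [(h1 : v = t)] at hnr
          exact absurd (R.refl (W := (V0 ∪ {t}) \ {s}) ⟨Or.inr rfl, fun e => hst (e : t = s).symm⟩) hnr
      have := hF.2 _ _ hP (fun v hv => hv.1)
      rw [← this] at hsV
      exact hsV.2.1 rfl
  obtain ⟨M1, M2, y1, y2, m1, m2, m3, m4, m5, m6, m7⟩ := M2 ((h.finH C).subset sH) (Or.inr rfl)
    (Or.inl hw) (by rintro rfl; exact f0.hcY hw) (hYs.trans Set.subset_union_left) hsep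
  have trim : ∀ (M : Set V) (x y : V), M ⊆ V0 ∪ {t} → x ∉ Ys → y ∈ Ys → R G M x y →
      ∃ Y c, MinF G H b Y c ∧ R G (M \ Ys) x c := by
    intro M x y hM hx hy hr
    obtain ⟨p, q, r, p1, p2, p3, p4, p5⟩ := hr.exit Ysᶜ hx (fun h => h hy)
    have p4 : q ∈ Ys := by simpa using p4
    obtain ⟨Y, c, hY, hq⟩ := p4
    have := (hY.1.cl q hq p (sH (hM p2)) p5.symm).resolve_left (fun hp => p1 ⟨Y, c, hY, hp⟩)
    subst this
    exact ⟨Y, p, hY, r⟩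
  obtain ⟨Yi, ci, hYi, r1⟩ := trim M1 t y1 m1 (fun ht => f0.hcY (hYs ht)) m4 m6
  obtain ⟨Yj, cj, hYj, r2⟩ := trim M2 w y2 m2 (by rintro ⟨Y, c, hY, hwY⟩; exact hwn Y c hY hwY) m5 m7
  refine ⟨M1 \ Ys, M2 \ Ys, Yi, Yj, ci, cj, hYi, hYj, ?_, fun v hv => m1 hv.1, fun v hv => m2 hv.1,
    fun v hv hv' => m3 v hv.1 hv'.1, fun v hv Y c hY hvY => hv.2 ⟨Y, c, hY, hvY⟩,
    fun v hv Y c hY hvY => hv.2 ⟨Y, c, hY, hvY⟩, r1, r2⟩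
  rintro rfl
  have := hYi.1.attach_unique hYj.1 h.bH h.cH
  subst this
  exact m3 _ r1.right.1 r2.right.1

end GP

set_option linter.unusedVariables false
set_option linter.unusedSimpArgs false
namespace GP
open SimpleGraph
variable {V : Type*} {G : SimpleGraph V} {S : Set V} {a b : V} {β : V → V → ℕ}
variable {A B W W0 : Set V} {z r : V}

theorem Half.r_notin (h : Half G S a b A B) (h' : Half G S b a B A) (C : Ctx G S a b β)
    (hF : MinFull G A a W0 r) (hW : Frag G A a W z) (hn : ¬ Full G A a W) : r ∉ W ∧ W ⊆ W0 := by
  have rW : r ∉ W := by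
    intro hr
    have hra : r ≠ a := fun e => hW.hb (e ▸ hr)
    obtain ⟨-, h1⟩ := h'.stem_sub C.symm hF subset_rfl h.cD h.aD h.neD
    obtain ⟨u, v, -, e1, e2, e3, e4, e5⟩ := h1.exit {r} rfl (fun e => hra (e : a = r).symm)
    have : u = r := e1
    subst this
    have : v = a := e3.resolve_left e4
    subst this
    rcases hW.cl u hr v h.aD e5 with h2 | h2
    · exact hW.hb h2
    · exact h'.NF_ne hW hn h2.symm
  refine ⟨rW, fun v hv => ?_⟩
  rcases h'.stem_all C.symm hF v (hW.sub hv) with h1 | h1 | h1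
  · exact h1
  · subst h1; exact absurd hv hW.hb
  · subst h1; exact absurd hv rW

theorem Half.loc5 (h : Half G S a b A B) (h' : Half G S b a B A) (C : Ctx G S a b β)
    (hW : MaxNF G A a W z) (hF : MinFull G A a W0 r) {ui uj : V} (hui : ui ∈ A \ W) (huj : uj ∈ A \ W)
    (uia : ui ≠ a) (uir : ui ≠ r) (uja : uj ≠ a) (ujz : uj ≠ z) :
    ∃ P1 P2 : Set V, P1 ⊆ A \ W ∧ P2 ⊆ A \ W ∧ (∀ v ∈ P1, v ∉ P2) ∧
      ((R G P1 a z ∧ R G P2 uj ui) ∨ (R G P1 a uj ∧ R G P2 z ui)) := by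
  have k := h.move h' C hW.fr hW.nf
  have hza := h'.NF_ne hW.fr hW.nf
  have f0 := hF.1.1
  have all := h'.stem_all C.symm hF
  obtain ⟨-, hra⟩ := h'.stem_sub C.symm hF subset_rfl h.cD h.aD h.neD
  obtain ⟨rW, sW⟩ := h.r_notin h' C hF hW.fr hW.nf
  have hrA := f0.hc
  have hrn := f0.hcY
  have han := f0.hb
  have s0 := f0.sub
  have hzA := hW.fr.hc
  have hzW := hW.fr.hcY
  have haA := h.aD
  have haW := hW.fr.hb
  set D1 : Set V := (W0 \ W) ∪ {r} with hD1
  have memD1 : ∀ v, v ∈ D1 ↔ (v ∈ A \ W ∧ (v = a → r = a)) := by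
    intro v
    have := all v
    have := @s0 v
    simp only [hD1, Set.mem_union, Set.mem_sdiff, Set.mem_singleton_iff]; grind
  have cD1 : Cn G D1 := by
    by_cases e : r = a
    · have : D1 = A \ W := by ext v; rw [memD1]; simp [e]
      rw [this]; exact k.cD
    · have : D1 = (A \ W) \ {a} := by ext v; rw [memD1]; simp [e]
      rw [this]; exact k.cDa
  have zD : z ∈ D1 := (memD1 z).2 ⟨⟨hzA, hzW⟩, fun e => absurd e hza⟩
  have uiD : ui ∈ D1 := (memD1 ui).2 ⟨hui, fun e => absurd e uia⟩
  have ujD : uj ∈ D1 := (memD1 uj).2 ⟨huj, fun e => absurd e uja⟩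
  have rD : r ∈ D1 := Or.inr rfl
  have hsep : ∀ s, ∃ x, (x = r ∨ x = ui) ∧ ∃ y ∈ ({z, uj} : Set V), R G (D1 \ {s}) x y := by
    intro s
    by_contra hcon
    push Not at hcon
    by_cases hs : s ∈ D1
    swap
    · exact hcon r (Or.inl rfl) z (by simp) ((cD1 r rD z zD).mono
        (fun v hv => ⟨hv, fun e => hs ((e : v = s) ▸ hv)⟩))
    obtain ⟨y, hy, hys, hyz⟩ : ∃ y, y ∈ ({z, uj} : Set V) ∧ y ≠ s ∧ (y = z ∨ s = z) := by
      by_cases e : s = z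
      · exact ⟨uj, by simp, fun e' => ujz (e'.trans e), Or.inr e⟩
      · exact ⟨z, by simp, fun e' => e e'.symm, Or.inl rfl⟩
    have yD : y ∈ D1 := by rcases hy with rfl | hy; exact zD; rw [(hy : y = uj)]; exact ujD
    set K : Set V := {v | R G (D1 \ {s}) y v} with hK
    have rK : r ∉ K := fun hr => hcon r (Or.inl rfl) y hy (R.symm hr)
    have uiK : ui ∉ K := fun hr => hcon ui (Or.inr rfl) y hy (R.symm hr)
    have yK : y ∈ K := R.refl ⟨yD, hys⟩
    have KD : K ⊆ D1 := fun v hv => hv.right.1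
    have sK : s ∉ K := fun h => h.right.2 rfl
    have KW0 : ∀ v ∈ K, v ∈ W0 ∧ v ∉ W := by
      intro v hv
      rcases KD hv with h1 | h1
      · exact h1
      · rw [(h1 : v = r)] at hv; exact absurd hv rK
    have clK : ∀ x, x ∈ W0 → x ∉ W → ∀ v ∈ A, G.Adj x v → v ∉ W → v ∈ D1 := by
      intro x hx hxW v hv ad hvW
      rcases f0.cl x hx v hv ad with h1 | h1
      · exact Or.inl ⟨h1, hvW⟩
      · exact Or.inr h1
    have hsA : s ∈ A := ((memD1 s).1 hs).1.1
    have hsW : s ∉ W := ((memD1 s).1 hs).1.2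
    have fK : Frag G A a (K ∪ W) s := by
      refine ⟨⟨y, Or.inl yK⟩, ?_, ?_, hsA, ?_, ?_⟩
      · rintro v (hv | hv)
        · exact s0 (KW0 v hv).1
        · exact hW.fr.sub hv
      · rintro (hv | hv)
        · exact han (KW0 a hv).1
        · exact haW hv
      · rintro (hv | hv)
        · exact sK hv
        · exact hsW hv
      · rintro u (hu | hu) v hv ad
        · by_cases hvW : v ∈ W
          · exact Or.inl (Or.inr hvW)
          by_cases hvs : v = s
          · exact Or.inr hvs
          · exact Or.inl (Or.inl (R.snoc hu ad
              ⟨clK u (KW0 u hu).1 (KW0 u hu).2 v hv ad hvW, hvs⟩))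
        · rcases hW.fr.cl u hu v hv ad with h1 | h1
          · exact Or.inl (Or.inr h1)
          · subst h1
            rcases hyz with h2 | h2
            · subst h2; exact Or.inl (Or.inl yK)
            · exact Or.inr h2.symm
    have hfull : Full G A a (K ∪ W) := by
      by_contra hnf
      have := hW.mx _ _ fK Set.subset_union_right hnf
      have hyW : y ∈ W := by rw [← this]; exact Or.inl yK
      exact (KW0 y yK).2 hyW
    by_cases hsr : s = r
    · subst hsr
      have uiW0 : ui ∈ W0 ∧ ui ∉ W := uiD.resolve_right uir
      set K' : Set V := {v | R G (D1 \ {s}) ui v} with hK'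
      have KW0' : ∀ v ∈ K', v ∈ W0 ∧ v ∉ W := by
        intro v hv
        exact hv.right.1.resolve_right hv.right.2
      have dis : ∀ v ∈ K', v ∉ K := fun v hv hv' => uiK (R.trans hv' (R.symm hv))
      have zK' : z ∉ K' := by
        intro hz
        rcases hyz with h2 | h2
        · subst h2; exact dis _ hz yK
        · subst h2; exact hz.right.2 rfl
      have fK' : Frag G A a K' s := by
        refine ⟨⟨ui, R.refl ⟨uiD, uir⟩⟩, fun v hv => s0 (KW0' v hv).1, fun hv => han (KW0' a hv).1,
          hsA, fun hv => hv.right.2 rfl, ?_⟩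
        intro u hu v hv ad
        by_cases hvs : v = s
        · exact Or.inr hvs
        by_cases hvW : v ∈ W
        · rcases hW.fr.cl v hvW u (s0 (KW0' u hu).1) ad.symm with h1 | h1
          · exact absurd h1 (KW0' u hu).2
          · subst h1; exact absurd hu zK'
        exact Or.inl (R.snoc hu ad
              ⟨clK u (KW0' u hu).1 (KW0' u hu).2 v hv ad hvW, hvs⟩)
      obtain ⟨X, c, hs, hX⟩ := fK'.exists_MinF (h.finD C)
      obtain ⟨x, hx⟩ := hX.1.ne
      rcases hfull X c hX hx with h1 | h1
      · exact dis x (hs hx) h1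
      · exact (KW0' x (hs hx)).2 h1
    · have := hF.2 _ _ ⟨fK, hfull⟩ (by
        rintro v (hv | hv)
        · exact (KW0 v hv).1
        · exact sW hv)
      have uiW0 : ui ∈ W0 ∧ ui ∉ W := uiD.resolve_right uir
      rw [← this] at uiW0
      exact uiW0.1.elim uiK uiW0.2
  obtain ⟨M1, M2, y1, y2, m1, m2, m3, m4, m5, m6, m7⟩ := M2 ((h.finD C).subset
    (fun v hv => ((memD1 v).1 hv).1.1)) rD uiD uir.symm
    (by rintro v (hv | hv); rw [(hv : v = z)]; exact zD; rw [(hv : v = uj)]; exact ujD) hsep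
  have r0 : R G (M1 ∪ {a}) a y1 := by
    refine (hra.symm.mono ?_).trans (m6.mono Set.subset_union_left)
    rintro v (hv | hv)
    · rw [(hv : v = r)]; exact Or.inl m6.left
    · exact Or.inr hv
  refine ⟨M1 ∪ {a}, M2, ?_, fun v hv => ((memD1 v).1 (m2 hv)).1, ?_, ?_⟩
  · rintro v (hv | hv)
    · exact ((memD1 v).1 (m1 hv)).1
    · rw [(hv : v = a)]; exact ⟨haA, haW⟩
  · rintro v (hv | hv) hv2
    · exact m3 v hv hv2
    · rw [(hv : v = a)] at hv2
      have e := ((memD1 a).1 (m2 hv2)).2 rfl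
      rw [← e] at hv2
      exact m3 _ m6.left hv2
  · rcases m4 with h1 | h1 <;> rcases m5 with h2 | h2
    · rw [h1] at m6; rw [h2] at m7; exact absurd m7.right (m3 _ m6.right)
    · rw [h1] at r0; rw [h2] at m7; exact Or.inl ⟨r0, m7.symm⟩
    · rw [h1] at r0; rw [h2] at m7; exact Or.inr ⟨r0, m7.symm⟩
    · rw [h1] at m6; rw [h2] at m7; exact absurd m7.right (m3 _ m6.right)

end GP

set_option linter.unusedVariables false
set_option linter.unusedSimpArgs false
namespace GP
open SimpleGraph
variable {V : Type*} {G : SimpleGraph V} {S : Set V} {a b : V} {β : V → V → ℕ}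
variable {A B W W0 : Set V} {z r : V}

theorem Half.loc (h : Half G S a b A B) (h' : Half G S b a B A) (C : Ctx G S a b β)
    (nA : ∀ X, ¬ MinF G A a X a) (hW : MaxNF G A a W z) {x : V} (hx : x ∈ W) :
    ∃ Y c', MinF G (B ∪ W) b Y c' ∧ x ∈ Y ∧ c' ∈ B ∧ c' ≠ b ∧ Frag G B b (Y ∩ B) c' ∧
      ¬ Full G B b (Y ∩ B) := by
  have k := h.move h' C hW.fr hW.nf
  obtain ⟨X, c, hX, hXW⟩ : ∃ X c, MinF G A a X c ∧ ¬ X ⊆ W := by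
    by_contra hcon
    push Not at hcon
    exact hW.nf hcon
  have dXW : ∀ v ∈ X, v ∉ W := fun v hv hv' => hXW (hX.subset hW.fr h.aD h.cD hv hv')
  have hcW : c ∉ W := hX.1.attach_notin hW.fr h.aD h.cD dXW
  have hca : c ≠ a := by rintro rfl; exact nA _ hX
  have uX : Un G β (A \ W) a X c := ⟨hX.1.restrict dXW hcW, (h'.unit C.symm hX).pl⟩
  have WB : ∀ v ∈ W, v ∉ B := fun v hv => h.dj v (hW.fr.sub hv)
  have nb : ∀ Y c, MinF G (B ∪ W) b Y c → c ≠ b := by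
    rintro Y c' hY rfl
    obtain ⟨u, hu, v, hv, ad, hub⟩ := h'.exits C.symm hX.1 c'
    exact k.adjUnits C uX (k.unit C hY) hv (k.frag_b hY.1 u (Or.inl hu) hub) ad.symm (Or.inl hca)
  have two : ∀ Y c, MinF G (B ∪ W) b Y c → ∃ Y2 c2, MinF G (B ∪ W) b Y2 c2 ∧ Y2 ≠ Y := by
    intro Y c' hY
    by_contra hcon
    push Not at hcon
    exact k.special C uX hca hY (nb _ _ hY) (k.stem_all C (hY.minFull hcon))
  have stepE : ∀ w ∈ W, G.Adj z w → ∃ Y c, MinF G (B ∪ W) b Y c ∧ w ∈ Y := by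
    intro w hw az
    by_contra hcon
    push Not at hcon
    obtain ⟨V0, t, hF⟩ := k.exists_MinFull C
    obtain ⟨tB, rt⟩ := k.stem_sub C hF (Set.subset_union_left) h.cH h.bH h.neH
    have wV : w ∈ V0 := by
      rcases k.stem_all C hF w (Or.inr hw) with h1 | h1 | h1
      · exact h1
      · exact absurd h.bH (h1 ▸ WB w hw)
      · exact absurd tB (h1 ▸ WB w hw)
    obtain ⟨N1, N2, Yi, Yj, ci, cj, hYi, hYj, hij, s1, s2, d12, n1, n2, r1, r2⟩ :=
      k.loc4 C hF two wV hcon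
    obtain ⟨W0, r, hF0⟩ := h'.exists_MinFull C.symm
    obtain ⟨ui, hui, vi, hvi, adi, uia, uir⟩ := k.Q C nb hYi hYj hij.symm r
    obtain ⟨uj, huj, vj, hvj, adj, uja, ujz⟩ := k.Q C nb hYj hYi hij z
    obtain ⟨P1, P2, p1, p2, dP, hP⟩ := h.loc5 h' C hW hF0 hui huj uia uir uja ujz
    have V0s := hF.1.1.sub
    have tH := hF.1.1.hc
    have hi := hF.1.2 _ _ hYi
    have hj := hF.1.2 _ _ hYj
    have tV := hF.1.1.hcY
    have bV := hF.1.1.hb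
    have tN := r1.left
    have dQ : ∀ v ∈ N1 ∪ {t, b}, v ∉ N2 := by
      rintro v (hv | hv | hv) hv2
      · exact d12 v hv hv2
      · rw [(hv : v = t)] at hv2; exact d12 t tN hv2
      · rw [(hv : v = b)] at hv2
        rcases s2 hv2 with h1 | h1
        · exact bV h1
        · rw [(h1 : b = t)] at hv2; exact d12 t tN hv2
    have dQY : ∀ Y c, MinF G (B ∪ W) b Y c → ∀ v ∈ N1 ∪ {t, b}, v ∉ Y := by
      rintro Y c hY v (hv | hv | hv) hv2
      · exact n1 v hv Y c hY hv2
      · rw [(hv : v = t)] at hv2; exact tV (hF.1.2 _ _ hY hv2)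
      · rw [(hv : v = b)] at hv2; exact hY.1.hb hv2
    refine weave C k.subD k.subH k.dj (Q1 := N1 ∪ {t, b}) (Q2 := N2) (ci := ci) p1 p2 ?_ ?_ hYi.1.sub hYj.1.sub
      dP dQ ?_ (dQY _ _ hYi) (dQY _ _ hYj) (fun v hv => n2 v hv _ _ hYi) (fun v hv => n2 v hv _ _ hYj)
      hvi hvj adi adj az ?_ ?_ ?_ r2 hP
    · rintro v (hv | hv | hv)
      · rcases s1 hv with h1 | h1
        · exact V0s h1
        · rw [(h1 : v = t)]; exact tH
      · rw [(hv : v = t)]; exact tH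
      · rw [(hv : v = b)]; exact Or.inl h.bH
    · intro v hv
      rcases s2 hv with h1 | h1
      · exact V0s h1
      · rw [(h1 : v = t)]; exact tH
    · intro v hv hv'
      exact hij (hYi.eq hYj k.bH k.cH hv hv')
    · rw [C.bsymm]; exact ((k.unit C hYi).pl vi hvi).symm
    · rw [C.bsymm]; exact ((k.unit C hYj).pl vj hvj).symm
    · exact (r1.symm.mono Set.subset_union_left).trans (rt.mono Set.subset_union_right)
  have F0 : ∀ Y c, MinF G (B ∪ W) b Y c → c ∈ B ∧ Frag G B b (Y ∩ B) c := by
    intro Y c' hY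
    obtain ⟨u, hu, v, hv, ad, huz⟩ := k.exits C hY.1 z
    have vB : v ∈ B := by
      rcases hY.1.sub hv with h1 | h1
      · exact h1
      · rcases hW.fr.cl v h1 u hu.1 ad.symm with h2 | h2
        · exact absurd h2 hu.2
        · exact absurd h2 huz
    obtain ⟨u', v', -, e1, e2, e3, e4, e5⟩ := (h.cH v vB b h.bH).exit Y hv hY.1.hb
    have e6 := (hY.1.cl u' e1 v' (Or.inl e3) e5).resolve_left e4
    subst e6
    refine ⟨e3, ⟨v, hv, vB⟩, Set.inter_subset_right, fun hh => hY.1.hb hh.1, e3, fun hh => e4 hh.1, ?_⟩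
    intro u hu v hv ad
    exact (hY.1.cl u hu.1 v (Or.inl hv) ad).imp (fun hh => ⟨hh, hv⟩) id
  obtain ⟨w, hw, adw⟩ := (hW.fr.cmp hx).exit h.aD h.cD
  have hw' : R G W x w := hw
  obtain ⟨Y, c', hY, wY⟩ := stepE w hw'.right adw.symm
  obtain ⟨hcB, hfr⟩ := F0 Y c' hY
  refine ⟨Y, c', hY, ?_, hcB, nb _ _ hY, hfr, ?_⟩
  · refine (hY.1.reach wY (hw'.symm.mono ?_)).1
    intro v hv
    exact ⟨Or.inr hv, fun e => WB v hv ((e : v = c') ▸ hcB)⟩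
  · intro hfull
    obtain ⟨Y2, c2, hY2, hne⟩ := two _ _ hY
    obtain ⟨-, hfr2⟩ := F0 _ _ hY2
    obtain ⟨X1, c1, s1, hX1⟩ := hfr2.exists_MinF (h.finH C)
    obtain ⟨q, hq⟩ := hX1.1.ne
    exact hne (hY2.eq hY k.bH k.cH (s1 hq).1 (hfull _ _ hX1 hq).1)

end GP

set_option linter.unusedVariables false
set_option linter.unusedSimpArgs false
namespace GP
open SimpleGraph
variable {V : Type*} {G : SimpleGraph V} {S : Set V} {a b : V} {β : V → V → ℕ}
variable {A B W W0 : Set V} {z r : V}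

theorem MaxNF.cross (aA : a ∈ A) (cA : Cn G A) (hW : MaxNF G A a W z)
    (sat : ∀ F, Frag G A a F z → F ⊆ W) {F : Set V} {e u w : V} (hF : Frag G A a F e)
    (hn : ¬ Full G A a F) (hw : w ∈ W) (hwF : w ∈ F ∨ w = e) (huF : u ∈ F ∨ u = e)
    (huW : u ∉ W) (huz : u ≠ z) : False := by
  by_cases eW : e ∈ W
  · have zF : z ∉ F := fun hz => hF.union_ne hW.fr aA cA eW hz
    have : Frag G A a (F ∪ W) z := by
      refine ⟨⟨w, Or.inr hw⟩, Set.union_subset hF.sub hW.fr.sub, ?_, hW.fr.hc, ?_, ?_⟩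
      · rintro (h1 | h1); exact hF.hb h1; exact hW.fr.hb h1
      · rintro (h1 | h1); exact zF h1; exact hW.fr.hcY h1
      · rintro p (hp | hp) v hv ad
        · rcases hF.cl p hp v hv ad with h1 | h1
          · exact Or.inl (Or.inl h1)
          · subst h1; exact Or.inl (Or.inr eW)
        · exact (hW.fr.cl p hp v hv ad).imp Or.inr id
    have := sat _ this
    rcases huF with h1 | h1
    · exact huW (this (Or.inl h1))
    · exact huW (h1 ▸ eW)
  have wF : w ∈ F := hwF.resolve_right (fun h1 => eW (h1 ▸ hw))
  by_cases zF : z ∈ F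
  · have : W ⊆ F := by
      intro x hx
      by_contra hxF
      have : a ∈ W \ F := by
        refine Cn.all cA (hW.fr.sub hx) ⟨hx, hxF⟩ aA ?_
        rintro p ⟨hp, hpF⟩ hpA v hv ad
        have hvF : v ∉ F := by
          intro hvF
          rcases hF.cl v hvF p hpA ad.symm with h1 | h1
          · exact hpF h1
          · exact eW (h1 ▸ hp)
        rcases hW.fr.cl p hp v hv ad with h1 | h1
        · exact ⟨h1, hvF⟩
        · exact absurd zF (h1 ▸ hvF)
      exact hW.fr.hb this.1
    rw [hW.mx _ _ hF this hn] at zF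
    exact hW.fr.hcY zF
  · have ez : e = z := by
      by_contra ez
      have : a ∈ W ∩ F := by
        refine Cn.all cA (hW.fr.sub hw) ⟨hw, wF⟩ aA ?_
        rintro p ⟨hp, hpF⟩ hpA v hv ad
        rcases hF.cl p hpF v hv ad with h1 | h1 <;> rcases hW.fr.cl p hp v hv ad with h2 | h2
        · exact ⟨h2, h1⟩
        · exact absurd (h2 ▸ h1) zF
        · exact absurd (h1 ▸ h2) eW
        · exact absurd (h1.symm.trans h2) ez
      exact hW.fr.hb this.1
    subst ez
    rcases huF with h1 | h1
    · exact huW (sat _ hF h1)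
    · exact huz h1

theorem Half.nosat (h : Half G S a b A B) (h' : Half G S b a B A) (C : Ctx G S a b β)
    (nA : ∀ X, ¬ MinF G A a X a) (nB : ∀ X, ¬ MinF G B b X b) (hW : MaxNF G A a W z)
    (sat : ∀ F, Frag G A a F z → F ⊆ W) : False := by
  have k := h.move h' C hW.fr hW.nf
  obtain ⟨x, hx⟩ := hW.fr.ne
  obtain ⟨Y, c', hY, xY, cB, cb, fY, nY⟩ := h.loc h' C nA hW hx
  obtain ⟨u, hu, y, yY, ad, huz⟩ := k.exits C hY.1 z
  have yB : y ∈ B := by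
    rcases hY.1.sub yY with h1 | h1
    · exact h1
    · rcases hW.fr.cl y h1 u hu.1 ad.symm with h2 | h2
      · exact absurd h2 hu.2
      · exact absurd h2 huz
  obtain ⟨v, w, -, hv, vY, wY, hw, adv⟩ := (hY.Cn y yY x xY).exit {v | R G (Y ∩ B) y v}
    (R.refl ⟨yY, yB⟩) (fun hh => h.dj x (hW.fr.sub hx) (R.right hh).2)
  have hv : R G (Y ∩ B) y v := hv
  have wW : w ∈ W := by
    rcases hY.1.sub wY with h1 | h1
    · exact absurd (R.snoc hv adv ⟨wY, h1⟩) hw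
    · exact h1
  obtain ⟨W', z', sW', hW'⟩ := fY.exists_MaxNF (h.finH C) nY
  obtain ⟨Y', e, hY', yY', eA, ea, fY', nY'⟩ := h'.loc h C.symm nB hW' (sW' ⟨yY, yB⟩)
  have vY' : v ∈ Y' := by
    refine (hY'.1.reach yY' (hv.mono ?_)).1
    intro p hp
    exact ⟨Or.inr (sW' hp), fun e' => h.dj e eA ((e' : p = e) ▸ hp.2)⟩
  refine hW.cross h.aD h.cD sat fY' nY' wW ?_ ?_ hu.2 huz
  · exact (hY'.1.cl v vY' w (Or.inl (hW.fr.sub wW)) adv).imp (fun hh => ⟨hh, hW.fr.sub wW⟩) id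
  · exact (hY'.1.cl y yY' u (Or.inl hu.1) ad.symm).imp (fun hh => ⟨hh, hu.1⟩) id

theorem Half.typei (h : Half G S a b A B) (h' : Half G S b a B A) (C : Ctx G S a b β)
    (nA : ∀ X, ¬ MinF G A a X a) (nB : ∀ X, ¬ MinF G B b X b) :
    ∃ W0 r, MinFull G A a W0 r ∧ r ≠ a ∧ ∀ x ∈ W0, ¬ G.Adj x b := by
  obtain ⟨W0, r, hF⟩ := h'.exists_MinFull C.symm
  have key : ∀ W z, MaxNF G A a W z → z = r := by
    intro W z hW
    have za := h'.NF_ne hW.fr hW.nf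
    by_contra hzr
    obtain ⟨F, hfF, hFW⟩ : ∃ F, Frag G A a F z ∧ ¬ F ⊆ W := by
      by_contra hcon
      push Not at hcon
      exact h.nosat h' C nA nB hW hcon
    have fU : Frag G A a (F ∪ W) z := by
      refine ⟨hfF.ne.mono Set.subset_union_left, Set.union_subset hfF.sub hW.fr.sub, ?_, hW.fr.hc, ?_, ?_⟩
      · rintro (h1 | h1); exact hfF.hb h1; exact hW.fr.hb h1
      · rintro (h1 | h1); exact hfF.hcY h1; exact hW.fr.hcY h1
      · rintro p (hp | hp) v hv ad
        · exact (hfF.cl p hp v hv ad).imp Or.inl id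
        · exact (hW.fr.cl p hp v hv ad).imp Or.inr id
    have full : Full G A a (F ∪ W) := by
      by_contra hn
      have := hW.mx _ _ fU Set.subset_union_right hn
      exact hFW (this ▸ Set.subset_union_left)
    obtain ⟨rW, sW⟩ := h.r_notin h' C hF hW.fr hW.nf
    by_cases rF : r ∈ F
    · have hra : r ≠ a := fun e => hfF.hb (e ▸ rF)
      obtain ⟨-, h1⟩ := h'.stem_sub C.symm hF subset_rfl h.cD h.aD h.neD
      obtain ⟨u, v, -, e1, e2, e3, e4, e5⟩ := h1.exit {r} rfl (fun e => hra (e : a = r).symm)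
      have : u = r := e1
      subst this
      have : v = a := e3.resolve_left e4
      subst this
      rcases hfF.cl u rF v h.aD e5 with h2 | h2
      · exact hfF.hb h2
      · exact za h2.symm
    · have sF : F ∪ W ⊆ W0 := by
        intro v hv
        rcases h'.stem_all C.symm hF v (fU.sub hv) with h1 | h1 | h1
        · exact h1
        · subst h1; exact absurd hv fU.hb
        · subst h1; exact absurd hv (fun hh => hh.elim rF rW)
      have e := hF.2 _ _ ⟨fU, full⟩ sF
      rcases h'.stem_all C.symm hF z fU.hc with h1 | h1 | h1
      · rw [← e] at h1; exact fU.hcY h1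
      · exact za h1
      · exact hzr h1
  obtain ⟨X, c, hX⟩ := h'.exists_MinF C.symm
  have nX : ¬ Full G A a X := by
    intro hf
    refine h.case21 h' C nA nB hX (fun X' c' hX' => ?_)
    exact hX.2 _ _ hX'.1 (hf _ _ hX')
  obtain ⟨W, z, sW, hW⟩ := hX.1.exists_MaxNF (h.finD C) nX
  have e := key _ _ hW
  subst e
  have za := h'.NF_ne hW.fr hW.nf
  refine ⟨W0, z, hF, za, ?_⟩
  intro x hx adb
  obtain ⟨-, sW0⟩ := h.r_notin h' C hF hW.fr hW.nf
  have fC := hF.1.1.cmp hx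
  have nC : ¬ Full G A a {y | R G W0 x y} := by
    intro hf
    have e := hF.2 _ _ ⟨fC, hf⟩ (fun v hv => R.right hv)
    have hne : ∃ v ∈ W0, v ∉ W := by
      by_contra hcon
      push Not at hcon
      exact hW.nf (fun Y c hY => (hF.1.2 _ _ hY).trans hcon)
    obtain ⟨v, hv, hvW⟩ := hne
    obtain ⟨w, hw⟩ := hW.fr.ne
    have r1 : R G W0 x v := by have := hv; rw [← e] at this; exact this
    have r2 : R G W0 x w := by have := sW0 hw; rw [← e] at this; exact this
    obtain ⟨p, q, -, e1, e2, e3, e4, e5⟩ := (r2.symm.trans r1).exit W hw hvW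
    have := (hW.fr.cl p e1 q (hF.1.1.sub e3) e5).resolve_left e4
    exact hF.1.1.hcY (this ▸ e3)
  obtain ⟨W1, z1, s1, hW1⟩ := fC.exists_MaxNF (h.finD C) nC
  obtain ⟨Y, c', hY, xY, cB, cb, fY, nY⟩ := h.loc h' C nA hW1 (s1 (R.refl hx))
  rcases hY.1.cl x xY b (Or.inl h.bH) adb with h1 | h1
  · exact hY.1.hb h1
  · exact cb h1.symm

theorem Half.main (h : Half G S a b A B) (h' : Half G S b a B A) (C : Ctx G S a b β) :
    (∃ X, MinF G A a X a) ∧ (∃ Y, MinF G B b Y b) := by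
  by_cases hA : ∃ X, MinF G A a X a
  · exact ⟨hA, h.case1 h' C hA⟩
  by_cases hB : ∃ Y, MinF G B b Y b
  · exact ⟨h'.case1 h C.symm hB, hB⟩
  exfalso
  push Not at hA hB
  obtain ⟨W0, r, hF, hra, hW0⟩ := h.typei h' C hA hB
  obtain ⟨V0, t, hT, htb, hV0⟩ := h'.typei h C.symm hB hA
  have sA := h'.stem_all C.symm hF
  have sB := h.stem_all C hT
  have fA := hF.1.1
  have fB := hT.1.1
  obtain ⟨u, hu, v, hv, hvn, ad, hp, hq⟩ := C.L3 (W0 ∪ V0)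
    (Set.union_subset (fA.sub.trans h.subD) (fB.sub.trans h.subH))
    (fA.ne.mono Set.subset_union_left)
    (by rintro (h1 | h1); exact fA.hb h1; exact h.aH (fB.sub h1))
    (by rintro (h1 | h1); exact h.bD (fA.sub h1); exact fB.hb h1)
    r (h.subD fA.hc)
    (by rintro (h1 | h1); exact fA.hcY h1; exact h.dj _ fA.hc (fB.sub h1)) hra
    (fun e => h.dj _ fA.hc (e ▸ h.bH)) r t
  rcases hu with hu | hu
  · rcases (h.un v).1 hv with h1 | h1
    · rcases fA.cl u hu v h1 ad with h2 | h2
      · exact hvn (Or.inl h2)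
      · exact hp h2
    · rcases sB v h1 with h2 | h2 | h2
      · exact hvn (Or.inr h2)
      · subst h2; exact hW0 u hu ad
      · exact hq h2
  · rcases (h.un v).1 hv with h1 | h1
    · rcases sA v h1 with h2 | h2 | h2
      · exact hvn (Or.inl h2)
      · subst h2; exact hV0 u hu ad
      · exact hp h2
    · rcases fB.cl u hu v h1 ad with h2 | h2
      · exact hvn (Or.inr h2)
      · exact hq h2

end GP

set_option linter.unusedVariables false
set_option linter.unusedSimpArgs false
namespace GP
open SimpleGraph
variable {V : Type*} {G : SimpleGraph V} {S : Set V} {a b : V} {β : V → V → ℕ}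
variable {A B W W0 : Set V} {z r : V}

theorem Linked.exits (L : Linked G S a b) {X : Set V} (hX : X ⊆ S) (hne : X.Nonempty) (aX : a ∉ X)
    (bX : b ∉ X) (p : V) : ∃ u ∈ X, ∃ v ∈ S, v ∉ X ∧ G.Adj u v ∧ v ≠ p := by
  by_cases hp : ∃ z ∈ X, z ≠ p
  · obtain ⟨z, hz, hzp⟩ := hp
    obtain ⟨w, hw, hr⟩ := L.reach p z (hX hz) hzp
    have wX : w ∉ X := by rcases hw with rfl | rfl <;> assumption
    obtain ⟨u, v, -, e1, e2, e3, e4, e5⟩ := hr.exit X hz wX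
    exact ⟨u, e1, v, e3.1, e4, e5, e3.2⟩
  · push Not at hp
    obtain ⟨z, hz⟩ := hne
    have hza : z ≠ a := fun e => aX (e ▸ hz)
    obtain ⟨w, hw, hr⟩ := L.reach a z (hX hz) hza
    have wX : w ∉ X := by rcases hw with rfl | rfl <;> assumption
    obtain ⟨u, v, -, e1, e2, e3, e4, e5⟩ := hr.exit X hz wX
    refine ⟨u, e1, v, e3.1, e4, e5, fun e => e4 ?_⟩
    rw [e, ← hp z hz]; exact hz

theorem L3_of (fin : S.Finite) (L : Linked G S a b) (bd : V → V → ℕ)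
    (bds : ∀ x y, bd x y = bd y x)
    (sub : ∀ W, W ⊆ S → W.ncard < S.ncard → ∀ p q, Linked G W p q → (∃ w ∈ W, w ≠ p ∧ w ≠ q) →
      (∀ w ∈ W, w ≠ p → w ≠ q → w ≠ a ∧ w ≠ b ∧ ∀ v ∈ S, G.Adj w v → v ∈ W) →
      PL G W p q (bd p q))
    (hk : ∀ p q l0 k l2, PT G S a p l0 → PT G S p q k → PT G S q b l2 → bd p q ≤ k →
      bd a b ≤ l0 + k + l2)
    (np : ¬ PL G S a b (bd a b)) :
    ∀ X, X ⊆ S → X.Nonempty → a ∉ X → b ∉ X → ∀ e ∈ S, e ∉ X → e ≠ a → e ≠ b →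
    ∀ p q, ∃ u ∈ X, ∃ v ∈ S, v ∉ X ∧ G.Adj u v ∧ v ≠ p ∧ v ≠ q := by
  intro X hX hne aX bX e eS eX ea eb p q
  by_contra hcon
  have N : ∀ u ∈ X, ∀ v ∈ S, v ∉ X → G.Adj u v → v = p ∨ v = q := by
    intro u hu v hv hvX ad
    by_contra h1
    push Not at h1
    exact hcon ⟨u, hu, v, hv, hvX, ad, h1.1, h1.2⟩
  have hp : p ∈ S ∧ p ∉ X ∧ p ≠ q := by
    obtain ⟨u, hu, v, hv, hvX, ad, hvq⟩ := L.exits hX hne aX bX q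
    have := (N u hu v hv hvX ad).resolve_right hvq
    subst this; exact ⟨hv, hvX, hvq⟩
  have hq : q ∈ S ∧ q ∉ X := by
    obtain ⟨u, hu, v, hv, hvX, ad, hvq⟩ := L.exits hX hne aX bX p
    have := (N u hu v hv hvX ad).resolve_left hvq
    subst this; exact ⟨hv, hvX⟩
  obtain ⟨hpS, hpX, hpq⟩ := hp
  obtain ⟨hqS, hqX⟩ := hq
  set W : Set V := X ∪ {p, q} with hWd
  have WS : W ⊆ S := by
    rintro v (hv | rfl | hv)
    · exact hX hv
    · exact hpS
    · rw [(hv : v = q)]; exact hqS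
  have Wlt : W.ncard < S.ncard := by
    refine Set.ncard_lt_ncard (WS.ssubset_of_ne ?_) fin
    intro eq
    have h1 : a ∈ W := by rw [eq]; exact L.hx
    have h2 : b ∈ W := by rw [eq]; exact L.hy
    have h3 : e ∈ W := by rw [eq]; exact eS
    have := L.ne
    simp only [hWd, Set.mem_union, Set.mem_insert_iff, Set.mem_singleton_iff] at h1 h2 h3
    grind
  have LW : Linked G W p q := by
    refine ⟨by simp [hWd], by simp [hWd], hpq, ?_⟩
    intro v z hz hzv
    rcases hz with hz | hz | hz
    · obtain ⟨w, hw, hr⟩ := L.reach v z (hX hz) hzv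
      have wX : w ∉ X := by rcases hw with rfl | rfl <;> assumption
      obtain ⟨u, v', e0, e1, e2, e3, e4, e5⟩ := hr.exit X hz wX
      refine ⟨v', N u e1 v' e3.1 e4 e5, (e0.mono ?_).snoc e5 ⟨?_, e3.2⟩⟩
      · intro x hx; exact ⟨Or.inl hx.2, hx.1.2⟩
      · rcases N u e1 v' e3.1 e4 e5 with h1 | h1 <;> simp [hWd, h1]
    · exact ⟨z, Or.inl hz, R.refl ⟨Or.inr (Or.inl hz), hzv⟩⟩
    · exact ⟨z, Or.inr hz, R.refl ⟨Or.inr (Or.inr hz), hzv⟩⟩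
  have pl : PL G W p q (bd p q) := by
    refine sub W WS Wlt p q LW ?_ ?_
    · obtain ⟨x, hx⟩ := hne
      exact ⟨x, Or.inl hx, fun e => hpX (e ▸ hx), fun e => hqX (e ▸ hx)⟩
    · intro w hw h1 h2
      have wX : w ∈ X := by
        rcases hw with h3 | h3 | h3
        · exact h3
        · exact absurd h3 h1
        · exact absurd h3 h2
      refine ⟨fun e => aX (e ▸ wX), fun e => bX (e ▸ wX), ?_⟩
      intro v hv ad
      by_cases hvX : v ∈ X
      · exact Or.inl hvX
      · rcases N w wX v hv hvX ad with h1 | h1 <;> simp [hWd, h1]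
  obtain ⟨M1, M2, y1, y2, m1, m2, m3, hy1, hy2, r1, r2⟩ := M2 (G := G) (W := S \ X)
    (fin.subset Set.sdiff_subset) (x1 := p) (x2 := q) ⟨hpS, hpX⟩ ⟨hqS, hqX⟩ hpq (Y := {a, b})
    (by rintro v (hv | hv)
        · rw [(hv : v = a)]; exact ⟨L.hx, aX⟩
        · rw [(hv : v = b)]; exact ⟨L.hy, bX⟩) (by
      intro s
      obtain ⟨z, hz⟩ := hne
      have : ∃ s', z ≠ s' ∧ (s ∉ X → s' = s) := by
        by_cases hs : s ∈ X
        · exact ⟨e, fun h => eX (h ▸ hz), fun h => absurd hs h⟩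
        · exact ⟨s, fun h => hs (h ▸ hz), fun _ => rfl⟩
      obtain ⟨s', hs1, hs2⟩ := this
      obtain ⟨w, hw, hr⟩ := L.reach s' z (hX hz) hs1
      have wX : w ∉ X := by rcases hw with rfl | rfl <;> assumption
      obtain ⟨u, v', e0, e1, e2, e3, e4, e5⟩ := hr.symm.exit Xᶜ wX (by simpa)
      have e4 : v' ∈ X := by simpa using e4
      refine ⟨u, N v' e4 u e2.1 e1 e5.symm, w, hw, e0.symm.mono ?_⟩
      rintro x ⟨⟨hx1, hx2⟩, hx3⟩
      refine ⟨⟨hx1, hx3⟩, ?_⟩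
      intro hxs
      have hxs : x = s := hxs
      subst hxs
      exact hx2 (hs2 hx3).symm)
  obtain ⟨k, hkb, hpt⟩ := pl
  obtain ⟨l1, t1⟩ := r1.PT
  obtain ⟨l2, t2⟩ := r2.PT
  have s1 : M1 ⊆ S := m1.trans Set.sdiff_subset
  have s2 : M2 ⊆ S := m2.trans Set.sdiff_subset
  have pM := r1.left
  have qM := r2.left
  have comb : ∀ x y, x ∈ M1 → y ∈ M2 → PT G M1 p x l1 → PT G M2 q y l2 →
      PT G S x y (l1 + k + l2) := by
    intro x y hx hy u1 u2
    refine ((u1.symm.join hpt ?_).join u2 ?_).mono ?_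
    · rintro v hv (hv2 | hv2 | hv2)
      · exact absurd hv2 (m1 hv).2
      · exact hv2
      · rw [(hv2 : v = q)] at hv; exact absurd qM (m3 q hv)
    · rintro v (hv | hv | hv | hv) hv2
      · exact absurd hv2 (m3 v hv)
      · exact absurd hv (m2 hv2).2
      · rw [(hv : v = p)] at hv2; exact absurd hv2 (m3 p pM)
      · exact hv
    · exact Set.union_subset (Set.union_subset s1 WS) s2
  have M1y := r1.right
  have M2y := r2.right
  have := comb y1 y2 M1y M2y t1 t2
  have hy12 : y1 ≠ y2 := fun e => m3 y1 M1y (e ▸ M2y)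
  rcases hy1 with e1 | e1 <;> rcases hy2 with e2 | e2
  · exact hy12 (e1.trans e2.symm)
  · have e2 : y2 = b := e2
    subst e1 e2
    exact np ⟨_, hk p q l1 k l2 (t1.symm.mono s1) (hpt.mono WS) (t2.mono s2) hkb, this⟩
  · have e1 : y1 = b := e1
    subst e1 e2
    refine np ⟨_, hk q p l2 k l1 (t2.symm.mono s2) (hpt.symm.mono WS) (t1.mono s1) ?_, ?_⟩
    · rw [bds]; exact hkb
    · have e : l2 + k + l1 = l1 + k + l2 := by omega
      rw [e]; exact this.symm
  · exact hy12 ((e1 : y1 = b).trans (e2 : y2 = b).symm)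

end GP

set_option linter.unusedVariables false
set_option linter.unusedSimpArgs false
namespace GP
open SimpleGraph
variable {V : Type*} {G : SimpleGraph V} {S : Set V} {a b : V} {β : V → V → ℕ}
variable {A B W W0 : Set V} {z r : V}

def Cut (G : SimpleGraph V) : Prop := ∀ x y, x ≠ y → ∃ P : Set V, x ∈ P ∧ y ∉ P ∧
  (∀ u v v', u ∈ P → v ∉ P → v' ∉ P → G.Adj u v → G.Adj u v' → v = v') ∧
  (∀ v u u', v ∉ P → u ∈ P → u' ∈ P → G.Adj v u → G.Adj v u' → u = u')

theorem twoN 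
    (L3 : ∀ X, X ⊆ S → X.Nonempty → a ∉ X → b ∉ X → ∀ e ∈ S, e ∉ X → e ≠ a → e ≠ b →
    ∀ p q, ∃ u ∈ X, ∃ v ∈ S, v ∉ X ∧ G.Adj u v ∧ v ≠ p ∧ v ≠ q)
    (two : ∃ x ∈ S \ {a, b}, ∃ y ∈ S \ {a, b}, x ≠ y) (p : V) :
    ∃ u ∈ S \ {a, b}, G.Adj a u ∧ u ≠ p := by
  have key : ∀ p ∈ S \ {a, b}, ∃ u ∈ S \ {a, b}, G.Adj a u ∧ u ≠ p := by
    intro p hp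
    have hp' := hp.2
    simp only [Set.mem_insert_iff, Set.mem_singleton_iff, not_or] at hp'
    obtain ⟨u, hu, v, hv, hvX, ad, h1, h2⟩ := L3 ((S \ {a, b}) \ {p})
      (fun v hv => hv.1.1) (by
        obtain ⟨x, hx, y, hy, hxy⟩ := two
        by_cases e : x = p
        · exact ⟨y, hy, fun e' => hxy (e.trans (e' : y = p).symm)⟩
        · exact ⟨x, hx, e⟩) (by simp) (by simp) p hp.1 (by simp) hp'.1 hp'.2 p b
    have : v = a := by
      by_contra hva
      exact hvX ⟨⟨hv, by simp [hva, h2]⟩, h1⟩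
    subst this
    exact ⟨u, hu.1, ad.symm, hu.2⟩
  by_cases hp : p ∈ S \ {a, b}
  · exact key p hp
  · obtain ⟨x, hx, y, hy, hxy⟩ := two
    obtain ⟨u, hu, ad, hux⟩ := key x hx
    exact ⟨u, hu, ad, fun e => hp (e ▸ hu)⟩

theorem Cn.add {H : Set V} {x y : V} (h : Cn G H) (hy : y ∈ H) (ad : G.Adj x y) : Cn G (H ∪ {x}) := by
  have key : ∀ u ∈ H ∪ {x}, R G (H ∪ {x}) u y := by
    rintro u (hu | hu)
    · exact (h u hu y hy).mono Set.subset_union_left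
    · rw [(hu : u = x)]; exact R.adj ad (Or.inr rfl) (Or.inl hy)
  intro u hu v hv
  exact (key u hu).trans (key v hv).symm

theorem comp_Cn {H : Set V} {x : V} : Cn G {v | R G H x v} := by
  have key : ∀ u, R G H x u → R G {v | R G H x v} x u := by
    intro u hu
    exact ((hu.closed {v | R G H x v} (R.refl hu.left) (fun p hp _ q hq ad => R.snoc hp ad hq)).2).mono
      Set.inter_subset_right
  intro u hu v hv
  exact (key u hu).symm.trans (key v hv)

theorem halves (cut : Cut G) (L : Linked G S a b)
    (L3 : ∀ X, X ⊆ S → X.Nonempty → a ∉ X → b ∉ X → ∀ e ∈ S, e ∉ X → e ≠ a → e ≠ b →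
    ∀ p q, ∃ u ∈ X, ∃ v ∈ S, v ∉ X ∧ G.Adj u v ∧ v ≠ p ∧ v ≠ q)
    (two : ∃ x ∈ S \ {a, b}, ∃ y ∈ S \ {a, b}, x ≠ y) :
    ∃ A B, Half G S a b A B ∧ Half G S b a B A ∧
      ∃ u ∈ A, ∃ v ∈ B, u ≠ a ∧ v ≠ b ∧ G.Adj u v := by
  set S0 : Set V := S \ {a, b} with hS0
  have nS0 : ∀ v ∈ S0, v ∈ S ∧ v ≠ a ∧ v ≠ b := by
    intro v hv
    have := hv.2
    simp only [Set.mem_insert_iff, Set.mem_singleton_iff, not_or] at this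
    exact ⟨hv.1, this⟩
  have cS0 : Cn G S0 := by
    intro x hx y hy
    by_contra hcon
    obtain ⟨u, hu, v, hv, hvX, ad, h1, h2⟩ := L3 {v | R G S0 x v} (fun v hv => (R.right hv).1)
      ⟨x, R.refl hx⟩ (fun h => (nS0 _ (R.right h)).2.1 rfl) (fun h => (nS0 _ (R.right h)).2.2 rfl)
      y hy.1 hcon (nS0 y hy).2.1 (nS0 y hy).2.2 a b
    exact hvX (R.snoc hu ad ⟨hv, by simp [h1, h2]⟩)
  obtain ⟨P, aP, bP, c1, c2⟩ := cut a b L.ne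
  obtain ⟨a1, a1S, a1P, ada⟩ : ∃ a1 ∈ S0, a1 ∈ P ∧ G.Adj a a1 := by
    by_contra hcon
    push Not at hcon
    obtain ⟨n1, h1, h2, -⟩ := twoN L3 two a
    obtain ⟨n2, h3, h4, h5⟩ := twoN L3 two n1
    exact h5 (c1 a n2 n1 aP (fun h => hcon n2 h3 h h4) (fun h => hcon n1 h1 h h2) h4 h2)
  obtain ⟨b1, b1S, b1P, adb⟩ : ∃ b1 ∈ S0, b1 ∉ P ∧ G.Adj b b1 := by
    by_contra hcon
    have L3' : ∀ X, X ⊆ S → X.Nonempty → b ∉ X → a ∉ X → ∀ e ∈ S, e ∉ X → e ≠ b → e ≠ a →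
      ∀ p q, ∃ u ∈ X, ∃ v ∈ S, v ∉ X ∧ G.Adj u v ∧ v ≠ p ∧ v ≠ q :=
      fun X h1 h2 h3 h4 e h5 h6 h7 h8 => L3 X h1 h2 h4 h3 e h5 h6 h8 h7
    have e : S \ {b, a} = S0 := by rw [hS0, Set.pair_comm]
    rw [← e] at two hcon
    push Not at hcon
    obtain ⟨n1, h1, h2, -⟩ := twoN L3' two a
    obtain ⟨n2, h3, h4, h5⟩ := twoN L3' two n1
    exact h5 (c2 b n2 n1 bP (by by_contra h; exact hcon n2 h3 h h4)
      (by by_contra h; exact hcon n1 h1 h h2) h4 h2)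
  set K : Set V := {v | R G (S0 ∩ P) a1 v} with hK
  set Lc : Set V := {v | R G (S0 \ K) b1 v} with hLc
  have KS : ∀ v ∈ K, v ∈ S0 ∧ v ∈ P := fun v hv => (show R G (S0 ∩ P) a1 v from hv).right
  have LS : ∀ v ∈ Lc, v ∈ S0 ∧ v ∉ K := fun v hv => (show R G (S0 \ K) b1 v from hv).right
  have a1K : a1 ∈ K := R.refl ⟨a1S, a1P⟩
  have b1K : b1 ∉ K := fun h => b1P (KS _ h).2
  have b1L : b1 ∈ Lc := R.refl ⟨b1S, b1K⟩
  have a1L : a1 ∉ Lc := fun h => (LS _ h).2 a1K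
  -- edges
  have ed : ∀ u ∈ S0, u ∉ Lc → ∀ v ∈ Lc, G.Adj u v → u ∈ K := by
    intro u hu huL v hv ad
    by_contra huK
    exact huL (R.snoc hv ad.symm ⟨hu, huK⟩)
  have ed2 : ∀ u ∈ K, ∀ v ∈ Lc, G.Adj u v → v ∉ P := by
    intro u hu v hv ad hvP
    exact (LS v hv).2 (R.snoc hu ad ⟨(LS v hv).1, hvP⟩)
  have cK : Cn G K := comp_Cn
  have cL : Cn G Lc := comp_Cn
  have KA : K ⊆ S0 \ Lc := fun v hv => ⟨(KS v hv).1, fun h => (LS v h).2 hv⟩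
  have cA0 : Cn G (S0 \ Lc) := by
    have key : ∀ x ∈ S0 \ Lc, R G (S0 \ Lc) x a1 := by
      intro x hx
      by_cases hxK : x ∈ K
      · exact (cK x hxK a1 a1K).mono KA
      obtain ⟨u, v, e0, e1, e2, e3, e4, e5⟩ := (cS0 x hx.1 a1 a1S).exit {v | R G (S0 \ K) x v}
        (R.refl ⟨hx.1, hxK⟩) (fun h => (R.right h).2 a1K)
      have vK : v ∈ K := by
        by_contra hvK
        exact e4 (R.snoc e1 e5 ⟨e3, hvK⟩)
      have r1 : R G (S0 \ Lc) x u := by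
        refine e0.mono ?_
        rintro w ⟨hw, hw2⟩
        have hw2 : R G (S0 \ K) x w := hw2
        refine ⟨hw, fun hwL => hx.2 ?_⟩
        exact R.trans (hwL : R G (S0 \ K) b1 w) hw2.symm
      exact (r1.snoc e5 (KA vK)).trans ((cK v vK a1 a1K).mono KA)
    intro x hx y hy
    exact (key x hx).trans (key y hy).symm
  have eA : ((S0 \ Lc) ∪ {a}) \ {a} = S0 \ Lc := by
    ext v
    have := nS0 v
    simp only [Set.mem_sdiff, Set.mem_union, Set.mem_singleton_iff]; grind
  have eB : (Lc ∪ {b}) \ {b} = Lc := by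
    ext v
    have := LS v
    have := nS0 v
    simp only [Set.mem_sdiff, Set.mem_union, Set.mem_singleton_iff]; grind
  have aS := L.hx
  have bS := L.hy
  have abne := L.ne
  have un : ∀ v, v ∈ S ↔ v ∈ (S0 \ Lc) ∪ {a} ∨ v ∈ Lc ∪ {b} := by
    intro v
    have := LS v
    have := nS0 v
    have : v ∈ S → v ≠ a → v ≠ b → v ∈ S0 := fun h1 h2 h3 => ⟨h1, by simp [h2, h3]⟩
    simp only [Set.mem_sdiff, Set.mem_union, Set.mem_singleton_iff]; grind
  have dj : ∀ v ∈ (S0 \ Lc) ∪ {a}, v ∉ Lc ∪ {b} := by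
    intro v
    have := LS v
    have := nS0 v
    simp only [Set.mem_sdiff, Set.mem_union, Set.mem_singleton_iff]; grind
  have cA : Cn G ((S0 \ Lc) ∪ {a}) := cA0.add ⟨a1S, a1L⟩ ada
  have cB : Cn G (Lc ∪ {b}) := cL.add b1L adb
  have mB : ∀ v ∈ Lc ∪ {b}, v ≠ b → ∀ u ∈ (S0 \ Lc) ∪ {a}, ∀ u' ∈ (S0 \ Lc) ∪ {a},
      G.Adj v u → G.Adj v u' → u = u' := by
    intro v hv hvb u hu u' hu' ad ad'
    have hv : v ∈ Lc := hv.resolve_right hvb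
    have f : ∀ u ∈ (S0 \ Lc) ∪ {a}, G.Adj v u → u = a ∨ (u ∈ K ∧ v ∉ P) := by
      rintro u (hu | hu) ad
      · have := ed u hu.1 hu.2 v hv ad.symm
        exact Or.inr ⟨this, ed2 u this v hv ad.symm⟩
      · exact Or.inl hu
    rcases f u hu ad with h1 | h1 <;> rcases f u' hu' ad' with h2 | h2
    · exact h1.trans h2.symm
    · exact c2 v u u' h2.2 (h1 ▸ aP) (KS _ h2.1).2 ad ad'
    · exact c2 v u u' h1.2 (KS _ h1.1).2 (h2 ▸ aP) ad ad'
    · exact c2 v u u' h1.2 (KS _ h1.1).2 (KS _ h2.1).2 ad ad'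
  have mA : ∀ v ∈ (S0 \ Lc) ∪ {a}, v ≠ a → ∀ u ∈ Lc ∪ {b}, ∀ u' ∈ Lc ∪ {b},
      G.Adj v u → G.Adj v u' → u = u' := by
    intro v hv hva u hu u' hu' ad ad'
    have hv : v ∈ S0 \ Lc := hv.resolve_right hva
    have f : ∀ u ∈ Lc ∪ {b}, G.Adj v u → u = b ∨ (v ∈ K ∧ u ∉ P) := by
      rintro u (hu | hu) ad
      · have := ed v hv.1 hv.2 u hu ad
        exact Or.inr ⟨this, ed2 v this u hu ad⟩
      · exact Or.inl hu
    rcases f u hu ad with h1 | h1 <;> rcases f u' hu' ad' with h2 | h2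
    · exact h1.trans h2.symm
    · exact c1 v u u' (KS _ h2.1).2 (h1 ▸ bP) h2.2 ad ad'
    · exact c1 v u u' (KS _ h1.1).2 h1.2 (h2 ▸ bP) ad ad'
    · exact c1 v u u' (KS _ h1.1).2 h1.2 h2.2 ad ad'
  have ha1 := (nS0 a1 a1S).2.1
  have hb1 := (nS0 b1 b1S).2.2
  refine ⟨(S0 \ Lc) ∪ {a}, Lc ∪ {b}, ⟨Or.inr rfl, Or.inr rfl, dj, un, cA, cB, ?_, ?_,
    ⟨a1, Or.inl ⟨a1S, a1L⟩, ha1⟩, ⟨b1, Or.inl b1L, hb1⟩, mB⟩,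
    ⟨Or.inr rfl, Or.inr rfl, fun v h1 h2 => dj v h2 h1, fun v => (un v).trans or_comm, cB, cA, ?_, ?_,
    ⟨b1, Or.inl b1L, hb1⟩, ⟨a1, Or.inl ⟨a1S, a1L⟩, ha1⟩, mA⟩, ?_⟩
  · rw [eA]; exact cA0
  · rw [eB]; exact cL
  · rw [eB]; exact cL
  · rw [eA]; exact cA0
  · obtain ⟨u, v, e0, e1, e2, e3, e4, e5⟩ := (cS0 a1 a1S b1 b1S).exit (S0 \ Lc) ⟨a1S, a1L⟩
      (fun h => h.2 b1L)
    have vL : v ∈ Lc := by by_contra h; exact e4 ⟨e3, h⟩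
    exact ⟨u, Or.inl e1, v, Or.inl vL, (nS0 u e2).2.1, (nS0 v e3).2.2, e5⟩

theorem engine (cut : Cut G) (fin : S.Finite) (L : Linked G S a b) (third : ∃ w ∈ S, w ≠ a ∧ w ≠ b)
    (bd : V → V → ℕ) (bds : ∀ x y, bd x y = bd y x)
    (sub : ∀ W, W ⊆ S → W.ncard < S.ncard → ∀ p q, Linked G W p q → (∃ w ∈ W, w ≠ p ∧ w ≠ q) →
      (∀ w ∈ W, w ≠ p → w ≠ q → w ≠ a ∧ w ≠ b ∧ ∀ v ∈ S, G.Adj w v → v ∈ W) →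
      PL G W p q (bd p q))
    (hk : ∀ p q l0 k l2, PT G S a p l0 → PT G S p q k → PT G S q b l2 → bd p q ≤ k →
      bd a b ≤ l0 + k + l2)
    (tri : ∀ p ∈ S, p ≠ a → p ≠ b → G.Adj a p → G.Adj p b → (∀ v ∈ S, G.Adj p v → v = a ∨ v = b) →
      bd a b ≤ 2)
    (seg : ∀ W, W ⊆ S → ∀ x y, Linked G W x y → (∃ w ∈ W, w ≠ x ∧ w ≠ y) →
      (∀ w ∈ W, w ≠ x → w ≠ y → w ≠ a ∧ w ≠ b ∧
        ∀ v ∈ S, ∀ v' ∈ S, v ∉ W → v' ∉ W → G.Adj w v → G.Adj w v' → v = v') →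
      PL G W x y (β x y))
    (one : ∀ u ∈ S, u ≠ a → u ≠ b → ∀ c p, G.Adj u c → (∀ v ∈ S, G.Adj u v → v = c ∨ v = p) →
      β c u ≤ 1)
    (bsymm : ∀ x y, β x y = β y x)
    (hK : ∀ x1 y1 x2 y2 l0 k1 l1 k2 l2, PT G S a x1 l0 → PT G S x1 y1 k1 → PT G S y1 x2 l1 →
      PT G S x2 y2 k2 → PT G S y2 b l2 → β x1 y1 ≤ k1 → β x2 y2 ≤ k2 →
      ((1 ≤ l1 ∧ 2 ≤ l0 + l1 + l2) ∨ 2 ≤ l0 ∨ 2 ≤ l2) → bd a b ≤ l0 + k1 + l1 + k2 + l2) :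
    PL G S a b (bd a b) ∨ ∃ A B, Half G S a b A B ∧ Half G S b a B A ∧
      (∃ u ∈ A, ∃ v ∈ B, u ≠ a ∧ v ≠ b ∧ G.Adj u v) ∧
      (∀ u ∈ A, u ≠ a → Linked G A a u ∧ PL G A a u (β a u)) ∧
      (∀ v ∈ B, v ≠ b → Linked G B b v ∧ PL G B b v (β b v)) := by
  by_cases np : PL G S a b (bd a b)
  · exact Or.inl np
  right
  have L3 := L3_of fin L bd bds sub hk np
  obtain ⟨w, hw, hwa, hwb⟩ := third
  have two : ∃ x ∈ S \ {a, b}, ∃ y ∈ S \ {a, b}, x ≠ y := by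
    by_contra hcon
    have h1 : ∀ v ∈ S, v = a ∨ v = b ∨ v = w := by
      intro v hv
      by_contra h1
      push Not at h1
      exact hcon ⟨v, ⟨hv, by simp [h1.1, h1.2.1]⟩, w, ⟨hw, by simp [hwa, hwb]⟩, h1.2.2⟩
    have f : ∀ c d, (c = a ∧ d = b) ∨ (c = b ∧ d = a) → G.Adj w d := by
      intro c d hcd
      have hwc : w ≠ c := by rcases hcd with h | h <;> rw [h.1] <;> assumption
      obtain ⟨x, hx, hr⟩ := L.reach c w hw hwc
      have hxw : x ≠ w := by rintro rfl; rcases hx with h | h; exact hwa h; exact hwb h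
      obtain ⟨u, v, -, e1, e2, e3, e4, e5⟩ := hr.exit {w} rfl hxw
      have e1 : u = w := e1
      have e4 : v ≠ w := e4
      have e6 : v ≠ c := e3.2
      subst e1
      have := h1 v e3.1
      have : v = d := by grind
      exact this ▸ e5
    have ab := f a b (Or.inl ⟨rfl, rfl⟩)
    have ba := f b a (Or.inr ⟨rfl, rfl⟩)
    refine np ⟨2, tri w hw hwa hwb ba.symm ab ?_, ?_⟩
    · intro v hv ad
      have := h1 v hv
      have : v ≠ w := ad.ne.symm
      grind
    · have h2 := (PT.adj (W := {a, w}) ba.symm (by simp) (by simp)).join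
        (PT.adj (W := {w, b}) ab (by simp) (by simp)) (by
          have := L.ne
          intro v; simp only [Set.mem_insert_iff, Set.mem_singleton_iff]; grind)
      refine h2.mono ?_
      have := L.hx
      have := L.hy
      intro v; simp only [Set.mem_union, Set.mem_insert_iff, Set.mem_singleton_iff]; grind
  obtain ⟨A, B, h, h', he⟩ := halves cut L L3 two
  have C : Ctx G S a b β := ⟨fin, L.hx, L.hy, L.ne, L3, seg, one, bsymm, by
    intro x1 y1 x2 y2 l0 k1 l1 k2 l2 t1 t2 t3 t4 t5 t6 t7 t8 t9
    exact np ⟨_, hK x1 y1 x2 y2 l0 k1 l1 k2 l2 t1 t2 t3 t4 t5 t6 t7 t8, t9⟩⟩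
  obtain ⟨⟨X, hX⟩, ⟨Y, hY⟩⟩ := h.main h' C
  refine ⟨A, B, h, h', he, ?_, ?_⟩
  · have e : X ∪ {a} = A := by
      ext v
      have := h'.frag_b hX.1 v
      have : v ∈ X → v ∈ A := fun hv => hX.1.sub hv
      have := h.aD
      simp only [Set.mem_union, Set.mem_singleton_iff]; grind
    intro u hu hua
    have uX := h'.frag_b hX.1 u hu hua
    rw [← e]
    exact ⟨hX.linked uX, (h'.unit C.symm hX).pl u uX⟩
  · have e : Y ∪ {b} = B := by
      ext v
      have := h.frag_b hY.1 v
      have : v ∈ Y → v ∈ B := fun hv => hY.1.sub hv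
      have := h.bH
      simp only [Set.mem_union, Set.mem_singleton_iff]; grind
    intro u hu hua
    have uX := h.frag_b hY.1 u hu hua
    rw [← e]
    exact ⟨hY.linked uX, (h.unit C hY).pl u uX⟩

end GP

set_option linter.unusedVariables false
set_option linter.unusedSimpArgs false
namespace GP
open SimpleGraph
variable {V : Type*} {G : SimpleGraph V} {S : Set V} {a b : V} {β : V → V → ℕ}
variable {A B W W0 : Set V} {z r : V}

theorem Linked.R (L : Linked G S a b) (third : ∃ w ∈ S, w ≠ a ∧ w ≠ b) : R G S a b := by
  obtain ⟨w, hw, hwa, hwb⟩ := third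
  obtain ⟨x, hx, hr⟩ := L.reach a w hw hwa
  obtain ⟨y, hy, hs⟩ := L.reach b w hw hwb
  have e1 : x = b := hx.resolve_left (fun e => hr.right.2 e)
  have e2 : y = a := hy.resolve_right (fun e => hs.right.2 e)
  subst e1 e2
  exact (hs.symm.mono Set.sdiff_subset).trans (hr.mono Set.sdiff_subset)

noncomputable def dg (G : SimpleGraph V) (S : Set V) (z : V) : ℕ := {v | v ∈ S ∧ G.Adj z v}.ncard

theorem dg_mono (hW : W.Finite) (h : ∀ v ∈ S, G.Adj z v → v ∈ W) : dg G S z ≤ dg G W z :=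
  Set.ncard_le_ncard (fun v hv => ⟨h v hv.1 hv.2, hv.2⟩) (hW.subset (fun v hv => hv.1))

theorem dg_one (hS : S.Finite) (sW : W ⊆ S)
    (h : ∀ v ∈ S, ∀ v' ∈ S, v ∉ W → v' ∉ W → G.Adj z v → G.Adj z v' → v = v') :
    dg G S z ≤ dg G W z + 1 := by
  have e : {v | v ∈ S ∧ G.Adj z v} ⊆ {v | v ∈ W ∧ G.Adj z v} ∪ {v | v ∈ S ∧ v ∉ W ∧ G.Adj z v} := by
    intro v hv
    by_cases hvW : v ∈ W
    · exact Or.inl ⟨hvW, hv.2⟩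
    · exact Or.inr ⟨hv.1, hvW, hv.2⟩
  have f1 : {v | v ∈ W ∧ G.Adj z v}.Finite := hS.subset (fun v hv => sW hv.1)
  have f2 : {v | v ∈ S ∧ v ∉ W ∧ G.Adj z v}.Finite := hS.subset (fun v hv => hv.1)
  have h2 : {v | v ∈ S ∧ v ∉ W ∧ G.Adj z v}.ncard ≤ 1 := by
    rw [Set.ncard_le_one f2]
    intro v hv v' hv'
    exact h v hv.1 v' hv'.1 hv.2.1 hv'.2.1 hv.2.2 hv'.2.2
  calc dg G S z ≤ _ := Set.ncard_le_ncard e (f1.union f2)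
    _ ≤ _ := Set.ncard_union_le _ _
    _ ≤ _ := by unfold dg; omega

theorem dg_two {c p : V} (h : ∀ v ∈ S, G.Adj z v → v = c ∨ v = p) : dg G S z ≤ 2 := by
  calc dg G S z ≤ ({c, p} : Set V).ncard := Set.ncard_le_ncard (fun v hv => h v hv.1 hv.2) (by simp)
    _ ≤ 2 := by have h := Set.ncard_insert_le c {p}; simpa using h

theorem Half.kind3 (h : Half G S a b A B) {u v : V} {k1 k2 : ℕ} (hu : u ∈ A) (hv : v ∈ B)
    (ad : G.Adj u v) (p1 : PT G A a u k1) (p2 : PT G B b v k2) : PT G S a b (k1 + 1 + k2) := by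
  refine ((p1.join (PT.adj (W := {u, v}) ad (by simp) (by simp)) ?_).join p2.symm ?_).mono ?_
  · rintro x hx (hx2 | hx2)
    · exact hx2
    · rw [(hx2 : x = v)] at hx; exact absurd hv (h.dj v hx)
  · rintro x (hx | hx | hx) hx2
    · exact absurd hx2 (h.dj x hx)
    · rw [(hx : x = u)] at hx2; exact absurd hx2 (h.dj u hu)
    · exact hx
  · refine Set.union_subset (Set.union_subset h.subD ?_) h.subH
    rintro x (hx | hx)
    · rw [(hx : x = u)]; exact h.subD hu
    · rw [(hx : x = v)]; exact h.subH hv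

theorem star (cut : Cut G) (par : V → ℕ) (hpar : ∀ u v, G.Adj u v → par u + par v = 1)
    (hle : ∀ u, par u ≤ 1) (d : ℕ) : ∀ (S : Set V), S.Finite → ∀ a b, Linked G S a b →
    (∃ w ∈ S, w ≠ a ∧ w ≠ b) → (∀ z ∈ S, z ≠ a → z ≠ b → d + par z ≤ dg G S z) →
    PL G S a b (2 ^ d - par a - par b) := by
  induction d with
  | zero =>
    intro S fin a b L third hd
    obtain ⟨n, hn⟩ := (L.R third).PT
    refine ⟨n, ?_, hn⟩
    have := hn.pos L.ne
    simp only [pow_zero]; omega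
  | succ d ihd =>
    intro S fin
    induction hn : S.ncard using Nat.strong_induction_on generalizing S with
    | _ n ih =>
    intro a b L third hd
    have hU : 1 ≤ 2 ^ d := Nat.one_le_two_pow
    have hT : 2 ^ (d + 1) = 2 * 2 ^ d := by ring
    have d1 : d ≤ 1 → 2 ^ d ≤ 1 + d := by
      intro h
      interval_cases d <;> simp
    have pp : ∀ x y n, PT G S x y n → (n + par x + par y) % 2 = 0 := fun x y n h => h.parity par hpar
    rcases engine (β := fun x y => 2 ^ d - par x - par y) cut fin L third
      (fun x y => 2 ^ (d + 1) - par x - par y) (by intro x y; omega)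
      (by
        intro W sW hlt p q LW t hw
        refine ih W.ncard (hn ▸ hlt) W (fin.subset sW) rfl p q LW t ?_
        intro z hz hzp hzq
        obtain ⟨h1, h2, h3⟩ := hw z hz hzp hzq
        exact (hd z (sW hz) h1 h2).trans (dg_mono (fin.subset sW) h3))
      (by
        intro p q l0 k l2 t1 t2 t3 t4
        have := pp _ _ _ t1
        have := pp _ _ _ t2
        have := pp _ _ _ t3
        have := hle a
        have := hle b
        have := hle p
        have := hle q
        omega)
      (by
        intro p hp hpa hpb ad ad' hv
        have := dg_two hv
        have := hd p hp hpa hpb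
        have := hpar _ _ ad
        have := hpar _ _ ad'
        have := d1 (by omega)
        omega)
      (by
        intro W sW x y LW t hw
        refine ihd W (fin.subset sW) x y LW t ?_
        intro z hz hzp hzq
        obtain ⟨h1, h2, h3⟩ := hw z hz hzp hzq
        have := hd z (sW hz) h1 h2
        have := dg_one fin sW h3
        omega)
      (by
        intro u hu hua hub c p ad hv
        have := dg_two hv
        have := hd u hu hua hub
        have := hpar _ _ ad
        have := d1 (by omega)
        omega)
      (by intro x y; omega)
      (by
        intro x1 y1 x2 y2 l0 k1 l1 k2 l2 t1 t2 t3 t4 t5 t6 t7 t8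
        have := pp _ _ _ t1
        have := pp _ _ _ t2
        have := pp _ _ _ t3
        have := pp _ _ _ t4
        have := pp _ _ _ t5
        have := hle a
        have := hle b
        have := hle x1
        have := hle x2
        have := hle y1
        have := hle y2
        omega) with h | ⟨A, B, h, h', ⟨u, hu, v, hv, hua, hvb, ad⟩, hA, hB⟩
    · exact h
    · obtain ⟨k1, e1, p1⟩ := (hA u hu hua).2
      obtain ⟨k2, e2, p2⟩ := (hB v hv hvb).2
      refine ⟨_, ?_, h.kind3 hu hv ad p1 p2⟩
      have := hpar _ _ ad
      omega

theorem tee (cut : Cut G) (par : V → ℕ) (hpar : ∀ u v, G.Adj u v → par u + par v = 1)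
    (hle : ∀ u, par u ≤ 1) (d : ℕ) : ∀ (S : Set V), S.Finite → ∀ a b, Linked G S a b →
    (∃ w ∈ S, w ≠ a ∧ w ≠ b) → (∀ z ∈ S, z ≠ a → z ≠ b → d ≤ dg G S z) →
    PL G S a b (2 ^ d - 2) := by
  induction d with
  | zero =>
    intro S fin a b L third hd
    obtain ⟨n, hn⟩ := (L.R third).PT
    exact ⟨n, by simp, hn⟩
  | succ d ihd =>
    intro S fin
    by_cases hd0 : d = 0
    · subst hd0
      intro a b L third hd
      obtain ⟨n, hn⟩ := (L.R third).PT
      exact ⟨n, by simp, hn⟩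
    induction hn : S.ncard using Nat.strong_induction_on generalizing S with
    | _ n ih =>
    intro a b L third hd
    obtain ⟨e, rfl⟩ : ∃ e, d = e + 1 := ⟨d - 1, by omega⟩
    have hU : 1 ≤ 2 ^ e := Nat.one_le_two_pow
    have hT : 2 ^ (e + 1) = 2 * 2 ^ e := by ring
    have hT2 : 2 ^ (e + 1 + 1) = 4 * 2 ^ e := by ring
    have d1 : e ≤ 0 → 2 ^ e = 1 := by
      intro h
      interval_cases e; simp
    have pp : ∀ x y n, PT G S x y n → (n + par x + par y) % 2 = 0 := fun x y n h => h.parity par hpar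
    rcases engine (β := fun x y => 2 ^ (e + 1) - 2) cut fin L third
      (fun x y => 2 ^ (e + 1 + 1) - 2) (by intro x y; rfl)
      (by
        intro W sW hlt p q LW t hw
        refine ih W.ncard (hn ▸ hlt) W (fin.subset sW) rfl p q LW t ?_
        intro z hz hzp hzq
        obtain ⟨h1, h2, h3⟩ := hw z hz hzp hzq
        exact (hd z (sW hz) h1 h2).trans (dg_mono (fin.subset sW) h3))
      (by
        intro p q l0 k l2 t1 t2 t3 t4
        omega)
      (by
        intro p hp hpa hpb ad ad' hv
        have := dg_two hv
        have := hd p hp hpa hpb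
        have := d1 (by omega)
        omega)
      (by
        intro W sW x y LW t hw
        refine ihd W (fin.subset sW) x y LW t ?_
        intro z hz hzp hzq
        obtain ⟨h1, h2, h3⟩ := hw z hz hzp hzq
        have := hd z (sW hz) h1 h2
        have := dg_one fin sW h3
        omega)
      (by
        intro u hu hua hub c p ad hv
        have := dg_two hv
        have := hd u hu hua hub
        have := d1 (by omega)
        omega)
      (by intro x y; rfl)
      (by
        intro x1 y1 x2 y2 l0 k1 l1 k2 l2 t1 t2 t3 t4 t5 t6 t7 t8
        omega) with h | ⟨A, B, h, h', ⟨u, hu, v, hv, hua, hvb, ad⟩, hA, hB⟩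
    · exact h
    · have hlea := hle a
      have hleb := hle b
      have fin3 : ∀ u ∈ A, u ≠ a → ∀ v ∈ B, v ≠ b → G.Adj u v → ∃ k1 k2, 2 ^ (e + 1) - 2 ≤ k1 ∧
          2 ^ (e + 1) - 2 ≤ k2 ∧ PT G A a u k1 ∧ PT G B b v k2 := by
        intro u hu hua v hv hvb ad
        obtain ⟨k1, e1, p1⟩ := (hA u hu hua).2
        obtain ⟨k2, e2, p2⟩ := (hB v hv hvb).2
        exact ⟨k1, k2, e1, e2, p1, p2⟩
      obtain ⟨k1, k2, e1, e2, p1, p2⟩ := fin3 u hu hua v hv hvb ad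
      by_cases hab : par a = par b
      · refine ⟨_, ?_, h.kind3 hu hv ad p1 p2⟩
        have := pp _ _ _ (h.kind3 hu hv ad p1 p2)
        omega
      by_cases hex : ∃ u ∈ A, ∃ v ∈ B, u ≠ a ∧ v ≠ b ∧ G.Adj u v ∧ par u ≠ par a
      · obtain ⟨u, hu, v, hv, hua, hvb, ad, hne⟩ := hex
        obtain ⟨k1, k2, e1, e2, p1, p2⟩ := fin3 u hu hua v hv hvb ad
        refine ⟨_, ?_, h.kind3 hu hv ad p1 p2⟩
        have := pp _ _ _ (p1.mono h.subD)
        have := pp _ _ _ (p2.mono h.subH)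
        have := hpar _ _ ad
        omega
      · push Not at hex
        set par' : V → ℕ := fun x => if par x = par a then 0 else 1 with hp'
        have hua' := hex u hu v hv hua hvb ad
        have third' : ∃ w ∈ A, w ≠ a ∧ w ≠ u := by
          by_contra hcon
          push Not at hcon
          obtain ⟨x, y, -, f1, f2, f3, f4, f5⟩ := (h.cD a h.aD u hu).exit {a} rfl hua
          have f1 : x = a := f1
          have f4 : y ≠ a := f4
          have := hcon y f3 f4
          subst f1 this
          have := hpar _ _ f5
          omega
        obtain ⟨k1, e1, p1⟩ := star cut par' (by
          intro x y ad
          have := hpar x y ad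
          have := hle x
          have := hle y
          simp only [hp']; split_ifs <;> omega) (by intro x; simp only [hp']; split_ifs <;> omega)
          (e + 1) A (fin.subset h.subD) a u (hA u hu hua).1 third' (by
            intro z hz hza hzu
            have hzb : z ≠ b := fun e => h.bD (e ▸ hz)
            have h1 := hd z (h.subD hz) hza hzb
            by_cases hpz : par z = par a
            · have : dg G S z ≤ dg G A z + 1 := by
                refine dg_one fin h.subD ?_
                intro v hv v' hv' hvA hvA' ad ad'
                exact h'.m z hz hza v (((h.un v).1 hv).resolve_left hvA) v'
                  (((h.un v').1 hv').resolve_left hvA') ad ad'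
              simp only [hp', hpz, if_true]; omega
            · have : dg G S z ≤ dg G A z := by
                refine dg_mono (fin.subset h.subD) ?_
                intro v hv ad
                by_contra hvA
                have hvB := ((h.un v).1 hv).resolve_left hvA
                by_cases hvb : v = b
                · subst hvb
                  have := hpar _ _ ad
                  have := hle z
                  omega
                · exact hpz (hex z hz v hvB hza hvb ad)
              simp only [hp', hpz, if_false]; omega)
        refine ⟨_, ?_, h.kind3 hu hv ad p1 p2⟩
        simp only [hp', hua', if_true] at e1
        omega

end GP

set_option linter.unusedVariables false
set_option linter.unusedSimpArgs false
namespace GP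
open SimpleGraph

theorem grid_adj {n : ℕ} {x y : Fin n → ℤ} (h : (gridGraph n).Adj x y) :
    ∃ i, (x i - y i = 1 ∨ x i - y i = -1) ∧ ∀ j, j ≠ i → x j = y j := by
  obtain ⟨-, ⟨i, h1, h2⟩ | ⟨i, h1, h2⟩⟩ := h
  · refine ⟨i, ?_, h2⟩
    rcases abs_cases (x i - y i) with h3 | h3 <;> omega
  · refine ⟨i, ?_, fun j hj => (h2 j hj).symm⟩
    rcases abs_cases (y i - x i) with h3 | h3 <;> omega

theorem grid_cutc {n : ℕ} (i : Fin n) (c : ℤ) {u v v' : Fin n → ℤ} (hv : u i ≤ c ↔ c < v i)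
    (hv' : u i ≤ c ↔ c < v' i) (h : (gridGraph n).Adj u v) (h' : (gridGraph n).Adj u v') :
    v = v' := by
  obtain ⟨k, e1, e2⟩ := grid_adj h
  obtain ⟨k', e1', e2'⟩ := grid_adj h'
  have hk : i = k := by
    by_contra hne
    have := e2 i hne
    omega
  have hk' : i = k' := by
    by_contra hne
    have := e2' i hne
    omega
  subst hk
  subst hk'
  funext j
  by_cases hj : j = i
  · subst hj; omega
  · rw [← e2 j hj, ← e2' j hj]

def gpar {n : ℕ} (z : Fin n → ℤ) : ℕ := ((∑ i, z i) % 2).toNat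

theorem gpar_adj {n : ℕ} {x y : Fin n → ℤ} (h : (gridGraph n).Adj x y) : gpar x + gpar y = 1 := by
  obtain ⟨i, h1, h2⟩ := grid_adj h
  have : ∑ j, x j - ∑ j, y j = x i - y i := by
    rw [← Finset.sum_sub_distrib]
    exact Finset.sum_eq_single i (fun j _ hj => by rw [h2 j hj, sub_self]) (by simp)
  unfold gpar
  omega

theorem gpar_le {n : ℕ} (x : Fin n → ℤ) : gpar x ≤ 1 := by unfold gpar; omega

variable {n : ℕ} (G : (gridGraph n).Subgraph)

theorem coe_cut : Cut G.coe := by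
  intro x y hxy
  have hne : x.1 ≠ y.1 := fun e => hxy (Subtype.ext e)
  obtain ⟨i, hi⟩ := Function.ne_iff.1 hne
  have ad : ∀ u v : G.verts, G.coe.Adj u v → (gridGraph n).Adj u.1 v.1 := fun u v h => G.adj_sub h
  rcases lt_or_gt_of_ne hi with h | h
  · refine ⟨{v | v.1 i ≤ x.1 i}, ?_, ?_, ?_, ?_⟩
    · simp
    · simpa using h
    · intro u v v' hu hv hv' a1 a2
      simp only [Set.mem_setOf_eq, not_le] at hu hv hv'
      exact Subtype.ext (grid_cutc i (x.1 i) (by omega) (by omega) (ad _ _ a1) (ad _ _ a2))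
    · intro u v v' hu hv hv' a1 a2
      simp only [Set.mem_setOf_eq, not_le] at hu hv hv'
      exact Subtype.ext (grid_cutc i (x.1 i) (by omega) (by omega) (ad _ _ a1) (ad _ _ a2))
  · refine ⟨{v | y.1 i < v.1 i}, ?_, ?_, ?_, ?_⟩
    · simpa using h
    · simp
    · intro u v v' hu hv hv' a1 a2
      simp only [Set.mem_setOf_eq, not_lt] at hu hv hv'
      exact Subtype.ext (grid_cutc i (y.1 i) (by omega) (by omega) (ad _ _ a1) (ad _ _ a2))
    · intro u v v' hu hv hv' a1 a2
      simp only [Set.mem_setOf_eq, not_lt] at hu hv hv'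
      exact Subtype.ext (grid_cutc i (y.1 i) (by omega) (by omega) (ad _ _ a1) (ad _ _ a2))

theorem sub_R {V : Type*} {H : SimpleGraph V} (K : H.Subgraph) {x y : K.verts}
    (p : K.coe.Walk x y) : R H K.verts x.1 y.1 := by
  induction p with
  | nil => exact R.refl (Subtype.prop _)
  | cons h p ih => exact R.cons (K.adj_sub h) (Subtype.prop _) ih

theorem two_R {V : Type*} {H : SimpleGraph V} (h : TwoConnected H) {v x y : V} (hx : x ≠ v)
    (hy : y ≠ v) : R H {v}ᶜ x y := by
  have hc := (h.2 v).preconnected ⟨x, by simpa using hx⟩ ⟨y, by simpa using hy⟩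
  obtain ⟨p⟩ := hc
  refine (sub_R _ p).mono ?_
  intro w hw
  simpa using hw

theorem three_aux {V : Type*} {a b x y z : V} (h1 : x ≠ y) (h3 : x ≠ z) (h4 : y ≠ z)
    (hx : x ≠ a → x = b) (hy : y ≠ a → y = b) (hz : z ≠ a → z = b) : False := by
  by_cases e1 : x = a
  · have e2 := hy (fun e => h1 (e1.trans e.symm))
    have e3 := hz (fun e => h3 (e1.trans e.symm))
    exact h4 (e2.trans e3.symm)
  · have e2 := hx e1
    by_cases e3 : y = a
    · exact h3 (e2.trans (hz (fun e => h4 (e3.trans e.symm))).symm)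
    · exact h1 (e2.trans (hy e3).symm)

theorem far {x y : G.verts} (p : G.coe.Walk x y) (j : Fin n) : |y.1 j - x.1 j| ≤ p.length := by
  induction p with
  | nil => simp
  | cons h p ih =>
    rename_i u v w
    obtain ⟨i, h1, h2⟩ := grid_adj (G.adj_sub h : (gridGraph n).Adj u.1 v.1)
    have h3 : u.1 j - v.1 j = 1 ∨ u.1 j - v.1 j = -1 ∨ u.1 j - v.1 j = 0 := by
      by_cases hj : j = i
      · subst hj; omega
      · have := h2 j hj; omega
    rw [Walk.length_cons]
    push_cast
    rw [abs_le] at ih ⊢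
    omega

theorem fin_case (d : ℕ) (h2 : TwoConnected G.coe) (hf : G.verts.Finite) (a b : G.verts)
    (hab : a ≠ b) (hdeg : ∀ z : G.verts, z ≠ a → z ≠ b → d ≤ (G.neighborSet z.1).ncard) :
    PL G.coe Set.univ a b (2 ^ d - 2) := by
  have : Finite G.verts := hf
  refine tee (coe_cut G) (fun z => gpar z.1) (fun u v h => gpar_adj (G.adj_sub h))
    (fun u => gpar_le u.1) d Set.univ Set.finite_univ a b ⟨trivial, trivial, hab, ?_⟩ ?_ ?_
  · intro v z _ hzv
    have key : ∀ w, w ≠ v → R G.coe (Set.univ \ {v}) z w := fun w hw =>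
      (two_R h2 hzv hw).mono (fun q hq => ⟨trivial, hq⟩)
    by_cases e : a = v
    · exact ⟨b, Or.inr rfl, key b (fun e' => hab (e.trans e'.symm))⟩
    · exact ⟨a, Or.inl rfl, key a e⟩
  · obtain ⟨⟨x, y, z, h1, h3, h4⟩, -⟩ := h2
    by_contra hcon
    push Not at hcon
    exact three_aux h1 h3 h4 (hcon x trivial) (hcon y trivial) (hcon z trivial)
  · intro z _ hza hzb
    refine (hdeg z hza hzb).trans (le_of_eq ?_)
    have : G.neighborSet z.1 = Subtype.val '' {v : G.verts | v ∈ Set.univ ∧ G.coe.Adj z v} := by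
      ext w
      constructor
      · intro hw
        exact ⟨⟨w, G.edge_vert (G.adj_symm hw)⟩, ⟨trivial, hw⟩, rfl⟩
      · rintro ⟨v, ⟨-, hv⟩, rfl⟩
        exact hv
    rw [this, Set.ncard_image_of_injective _ Subtype.val_injective]
    rfl

theorem inf_case (d : ℕ) (h2 : TwoConnected G.coe) (hf : G.verts.Infinite) (a b : G.verts)
    (hab : a ≠ b) : PL G.coe Set.univ a b (2 ^ d - 2) := by
  obtain ⟨x, hxb, j, hj⟩ : ∃ x : G.verts, x ≠ b ∧ ∃ j, (2 ^ d : ℤ) < |x.1 j - a.1 j| := by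
    by_contra hcon
    push Not at hcon
    refine hf (((Set.finite_Icc (fun j => a.1 j - 2 ^ d) (fun j => a.1 j + 2 ^ d)).union
      (Set.finite_singleton b.1)).subset ?_)
    intro x hx
    by_cases hxb : x = b.1
    · exact Or.inr hxb
    · left
      have := hcon ⟨x, hx⟩ (fun e => hxb (congrArg Subtype.val e))
      constructor
      · intro j
        have := abs_le.1 (this j)
        simp only at this ⊢
        linarith [this.1]
      · intro j
        have := abs_le.1 (this j)
        simp only at this ⊢
        linarith [this.2]
  have hxa : x ≠ a := by
    rintro rfl
    have : (0 : ℤ) < 2 ^ d := by positivity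
    simp only [sub_self, abs_zero] at hj
    omega
  have go : ∀ s w : G.verts, s ≠ x → w ≠ s → w ≠ x →
      ∃ (y : G.verts) (p : G.coe.Walk w y), G.coe.Adj y x ∧ ∀ v ∈ p.support, v ≠ s ∧ v ≠ x := by
    intro s w hsx hws hwx
    obtain ⟨u, v, ⟨p, hp⟩, e1, e2, e3, e4, e5⟩ := (two_R h2 hws hsx.symm).exit {x}ᶜ hwx (by simp)
    have e4 : v = x := by simpa using e4
    subst e4
    exact ⟨u, p, e5, fun q hq => hp q hq⟩
  obtain ⟨y0, p0, ad0, hp0⟩ := go b a hxb.symm hab hxa.symm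
  have go2 : ∀ s : G.verts, ∃ F : Set G.verts, F.Finite ∧ (s ≠ x → ∃ w, (w = a ∨ w = b) ∧
      ∃ y, G.coe.Adj y x ∧ R G.coe F w y ∧ s ∉ F ∧ x ∉ F) := by
    intro s
    by_cases hs : s = x
    · exact ⟨∅, Set.finite_empty, fun h => absurd hs h⟩
    obtain ⟨w, hw, hws⟩ : ∃ w, (w = a ∨ w = b) ∧ w ≠ s := by
      by_cases e : a = s
      · exact ⟨b, Or.inr rfl, fun e' => hab (e.trans e'.symm)⟩
      · exact ⟨a, Or.inl rfl, e⟩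
    have hwx : w ≠ x := by rcases hw with rfl | rfl; exact hxa.symm; exact hxb.symm
    obtain ⟨y, p, ad, hp⟩ := go s w hs hws hwx
    exact ⟨{v | v ∈ p.support}, List.finite_toSet _, fun _ => ⟨w, hw, y, ad, ⟨p, fun v hv => hv⟩,
      fun h => (hp s h).1 rfl, fun h => (hp x h).2 rfl⟩⟩
  choose F hF1 hF2 using go2
  set P : Set G.verts := {v | v ∈ p0.support} with hP
  have Pf : P.Finite := List.finite_toSet _
  set W : Set G.verts := (P ∪ {b} ∪ ⋃ s ∈ P, F s) with hW
  have Wf : W.Finite := (Pf.union (Set.finite_singleton b)).union (Pf.biUnion (fun s _ => hF1 s))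
  have Px : ∀ s ∈ P, s ≠ x := fun s hs => (hp0 s hs).2
  have Wx : x ∉ W := by
    rintro ((h | h) | h)
    · exact Px x h rfl
    · exact hxb h
    · simp only [Set.mem_iUnion] at h
      obtain ⟨s, hs, h⟩ := h
      obtain ⟨w, -, y, -, -, -, h1⟩ := hF2 s (Px s hs)
      exact h1 h
  have r0 : R G.coe P a y0 := ⟨p0, fun v hv => hv⟩
  have PW : P ⊆ W := fun v hv => Or.inl (Or.inl hv)
  obtain ⟨M1, M2, y1, y2, m1, m2, m3, hy1, hy2, r1, r2⟩ := M2 (G := G.coe) Wf (x1 := a) (x2 := b)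
    (PW r0.left) (Or.inl (Or.inr rfl)) hab (Y := {y | y ∈ W ∧ G.coe.Adj y x}) (fun v hv => hv.1) (by
      intro s
      by_cases hs : s ∈ P
      · obtain ⟨w, hw, y, ad, hr, h3, h4⟩ := hF2 s (Px s hs)
        have FW : F s ⊆ W := fun v hv => Or.inr (Set.mem_biUnion hs hv)
        exact ⟨w, hw, y, ⟨FW hr.right, ad⟩, hr.mono (fun v hv => ⟨FW hv, fun e => h3 ((e : v = s) ▸ hv)⟩)⟩
      · exact ⟨a, Or.inl rfl, y0, ⟨PW r0.right, ad0⟩,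
          r0.mono (fun v hv => ⟨PW hv, fun e => hs ((e : v = s) ▸ hv)⟩)⟩)
  obtain ⟨l1, t1⟩ := r1.PT
  obtain ⟨l2, t2⟩ := r2.PT
  have y1M := r1.right
  have y2M := r2.right
  have q1 : PT G.coe (M1 ∪ {y1, x}) a x (l1 + 1) := t1.join
    (PT.adj hy1.2 (by simp) (by simp)) (by
      rintro v hv (hv2 | hv2)
      · exact hv2
      · rw [(hv2 : v = x)] at hv; exact absurd (m1 hv) Wx)
  have q2 : PT G.coe (M2 ∪ {y2, x}) b x (l2 + 1) := t2.join
    (PT.adj hy2.2 (by simp) (by simp)) (by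
      rintro v hv (hv2 | hv2)
      · exact hv2
      · rw [(hv2 : v = x)] at hv; exact absurd (m2 hv) Wx)
  have q3 := q1.join q2.symm (by
    have : y1 ≠ x := fun e => Wx (e ▸ m1 y1M)
    intro v hv hv2
    have := m3 v
    simp only [Set.mem_union, Set.mem_insert_iff, Set.mem_singleton_iff] at hv hv2
    grind)
  refine ⟨_, ?_, q3.mono (Set.subset_univ _)⟩
  obtain ⟨p, -, -, hp⟩ := q1
  have h5 := far G p j
  rw [hp] at h5
  have h6 : (2 ^ d : ℤ) < ((l1 + 1 : ℕ) : ℤ) := lt_of_lt_of_le hj h5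
  have h7 : 2 ^ d < l1 + 1 := by exact_mod_cast h6
  omega

end GP

/-- Let `G` be a 2-connected subgraph of the grid `ℤ^n` with distinct vertices `a, b`
such that every vertex `z ∉ {a,b}` has degree at least `d` in `G`.  Then `G` contains
an `a-b` path of length at least `2^d - 2`. -/
theorem grid_twoConnected_path (n d : ℕ) (G : (gridGraph n).Subgraph)
    (h2 : TwoConnected G.coe)
    (a b : Fin n → ℤ) (ha : a ∈ G.verts) (hb : b ∈ G.verts) (hab : a ≠ b)
    (hdeg : ∀ z ∈ G.verts, z ≠ a → z ≠ b → d ≤ (G.neighborSet z).ncard) :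
    ∃ p : G.coe.Walk ⟨a, ha⟩ ⟨b, hb⟩, p.IsPath ∧ 2 ^ d - 2 ≤ p.length := by
  have hab' : (⟨a, ha⟩ : G.verts) ≠ ⟨b, hb⟩ := fun e => hab (congrArg Subtype.val e)
  have key : GP.PL G.coe Set.univ ⟨a, ha⟩ ⟨b, hb⟩ (2 ^ d - 2) := by
    by_cases hf : G.verts.Finite
    · refine GP.fin_case G d h2 hf _ _ hab' ?_
      intro z hza hzb
      exact hdeg z.1 z.2 (fun e => hza (Subtype.ext e)) (fun e => hzb (Subtype.ext e))
    · exact GP.inf_case G d h2 hf _ _ hab'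
  obtain ⟨m, hm, p, hp, -, hl⟩ := key
  exact ⟨p, hp, by omega⟩
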